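/- arXiv:2006.14014 — 3 statements merged into one kernel-verified Lean document; each statement's English description precedes it below -/
import Mathlib

section
/- Let A be a finite-dimensional left Leibniz algebra over a field F of characteristic zero, let B be an ideal of A, let R = rad(B) and N = nilrad(B). Then R and N are ideals of A and A·R + R·A ⊆ N. -/
open Submodule

section LeibnizDefs

variable {F : Type*} {A : Type*} [Field F] [AddCommGroup A] [Module F A]

/-- The span of all products `b*c` with `b ∈ B`, `c ∈ C`. -/
def mulSub (mul : A →ₗ[F] A →ₗ[F] A) (B C : Submodule F A) : Submodule F A :=
  Submodule.span F {z : A | ∃ b ∈ B, ∃ c ∈ C, mul b c = z}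

/-- `fSub mul B C = B·C + C·B`, the function `f(B,C)`. -/
def fSub (mul : A →ₗ[F] A →ₗ[F] A) (B C : Submodule F A) : Submodule F A :=
  mulSub mul B C ⊔ mulSub mul C B

/-- `fIter mul B C n = f^{n+1}(B,C)` (so index `0` is `f^1(B,C) = f(B,C)`). -/
def fIter (mul : A →ₗ[F] A →ₗ[F] A) (B C : Submodule F A) : ℕ → Submodule F A
  | 0 => fSub mul B C
  | n + 1 => fSub mul B (fIter mul B C n)

/-- `lcs mul B n = B^{n+1}`, the lower central series (index `0` is `B^1 = B`). -/
def lcs (mul : A →ₗ[F] A →ₗ[F] A) (B : Submodule F A) : ℕ → Submodule F A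
  | 0 => B
  | n + 1 => mulSub mul B (lcs mul B n)

/-- `ds mul B n = B^{(n+1)}`, the derived series (index `0` is `B^{(1)} = B`). -/
def ds (mul : A →ₗ[F] A →ₗ[F] A) (B : Submodule F A) : ℕ → Submodule F A
  | 0 => B
  | n + 1 => mulSub mul (ds mul B n) (ds mul B n)

/-- `B^ω = ⋂_{i ≥ 1} B^i`. -/
def omegaSub (mul : A →ₗ[F] A →ₗ[F] A) (B : Submodule F A) : Submodule F A :=
  ⨅ n, lcs mul B n

/-- `B` is a subalgebra: a subspace closed under multiplication. -/
def IsSubalg (mul : A →ₗ[F] A →ₗ[F] A) (B : Submodule F A) : Prop :=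
  ∀ x ∈ B, ∀ y ∈ B, mul x y ∈ B

/-- `I` is an ideal of the subalgebra `S`: `I ⊆ S` and `xI + Ix ⊆ I` for all `x ∈ S`. -/
def IsIdealIn (mul : A →ₗ[F] A →ₗ[F] A) (I S : Submodule F A) : Prop :=
  I ≤ S ∧ ∀ x ∈ S, ∀ y ∈ I, mul x y ∈ I ∧ mul y x ∈ I

/-- `B` is subinvariant in `S`: there is a chain of subalgebras
`B = c 0 ⊆ c 1 ⊆ ⋯ ⊆ c t = S` with each term an ideal of the next. -/
def IsSubinvariantIn (mul : A →ₗ[F] A →ₗ[F] A) (B S : Submodule F A) : Prop :=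
  ∃ (t : ℕ) (c : ℕ → Submodule F A), c 0 = B ∧ c t = S ∧
    (∀ i ≤ t, IsSubalg mul (c i)) ∧ ∀ i < t, IsIdealIn mul (c i) (c (i + 1))

/-- `B` is nilpotent: `B^m = 0` for some `m`. -/
def IsNilpotentSub (mul : A →ₗ[F] A →ₗ[F] A) (B : Submodule F A) : Prop :=
  ∃ m, lcs mul B m = ⊥

/-- `B` is solvable: `B^{(m)} = 0` for some `m`. -/
def IsSolvableSub (mul : A →ₗ[F] A →ₗ[F] A) (B : Submodule F A) : Prop :=
  ∃ m, ds mul B m = ⊥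

/-- The centralizer `Z_A(B) = {x : xb = 0 = bx for all b ∈ B}`. -/
def centralizerSet (mul : A →ₗ[F] A →ₗ[F] A) (B : Submodule F A) : Set A :=
  {x : A | ∀ b ∈ B, mul x b = 0 ∧ mul b x = 0}

/-- `R` is the radical (the maximal solvable ideal) of the subalgebra `S`. -/
def IsRadicalIn (mul : A →ₗ[F] A →ₗ[F] A) (S R : Submodule F A) : Prop :=
  IsIdealIn mul R S ∧ IsSolvableSub mul R ∧
    ∀ T, IsIdealIn mul T S → IsSolvableSub mul T → T ≤ R

/-- `N` is the nilradical (the maximal nilpotent ideal) of the subalgebra `S`. -/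
def IsNilradicalIn (mul : A →ₗ[F] A →ₗ[F] A) (S N : Submodule F A) : Prop :=
  IsIdealIn mul N S ∧ IsNilpotentSub mul N ∧
    ∀ T, IsIdealIn mul T S → IsNilpotentSub mul T → T ≤ N

/-- `H` is a Cartan subalgebra: a nilpotent self-normalizing subalgebra. -/
def IsCartan (mul : A →ₗ[F] A →ₗ[F] A) (H : Submodule F A) : Prop :=
  IsSubalg mul H ∧ IsNilpotentSub mul H ∧
    ∀ x : A, (∀ h ∈ H, mul x h ∈ H ∧ mul h x ∈ H) → x ∈ H

/-- The subalgebra generated by a set: the smallest subalgebra containing it. -/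
def subalgGen (mul : A →ₗ[F] A →ₗ[F] A) (s : Set A) : Submodule F A :=
  sInf {S : Submodule F A | IsSubalg mul S ∧ s ⊆ (S : Set A)}

end LeibnizDefs


attribute [local instance] LieRing.ofAssociativeRing

section LieHelpers

lemma aux_comm_aeval {F E : Type*} [Field F] [Ring E] [Algebra F E] (x a y : E)
    (hy : x * a - a * x = y) (hc : Commute y a) (p : Polynomial F) :
    x * Polynomial.aeval a p - Polynomial.aeval a p * x
      = Polynomial.aeval a (Polynomial.derivative p) * y := by
  have hpow : ∀ n : ℕ, x * a ^ (n + 1) - a ^ (n + 1) * x = ((n : E) + 1) * a ^ n * y := by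
    intro n
    induction n with
    | zero => simpa using hy
    | succ n ih =>
      have h1 : x * a ^ (n + 1 + 1) - a ^ (n + 1 + 1) * x
          = (x * a ^ (n + 1) - a ^ (n + 1) * x) * a + a ^ (n + 1) * (x * a - a * x) := by
        rw [pow_succ a (n + 1)]; noncomm_ring
      rw [h1, ih, hy, mul_assoc _ y a, hc.eq, pow_succ a n]
      push_cast
      noncomm_ring
  induction p using Polynomial.induction_on' with
  | add p q hp hq =>
    simp only [map_add, mul_add, add_mul, ← hp, ← hq]; abel
  | monomial n c =>
    cases n with
    | zero => simp [Algebra.commutes]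
    | succ n =>
      rw [Polynomial.derivative_monomial, Polynomial.aeval_monomial, Polynomial.aeval_monomial,
        ← mul_assoc x, ← Algebra.commutes c x, mul_assoc, mul_assoc, ← mul_sub, hpow]
      simp only [Nat.add_sub_cancel, map_mul, map_natCast]
      push_cast
      simp only [mul_assoc]
      

lemma aux_jacobson_aux {F E : Type*} [Field F] [CharZero F] [Ring E] [Algebra F E] (x a y : E)
    (hy : x * a - a * x = y) (hc : Commute y a) (n : ℕ) :
    ∀ (p : Polynomial F), p ≠ 0 → p.natDegree ≤ n →
      (∃ m, Polynomial.aeval a p * y ^ m = 0) → IsNilpotent y := by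
  induction n with
  | zero =>
    rintro p hp hn ⟨m, hm⟩
    rw [Polynomial.eq_C_of_natDegree_le_zero hn] at hm hp
    have hc0 : p.coeff 0 ≠ 0 := by simpa using hp
    refine ⟨m, ?_⟩
    rw [Polynomial.aeval_C, ← Algebra.smul_def] at hm
    have := congrArg (fun z => (p.coeff 0)⁻¹ • z) hm
    simpa [smul_smul, hc0] using this
  | succ n ih =>
    rintro p hp hn ⟨m, hm⟩
    by_cases h0 : p.natDegree = 0
    · exact ih p hp (by omega) ⟨m, hm⟩
    refine ih (Polynomial.derivative p) ?_ ?_ ⟨m + 1 + m, ?_⟩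
    · intro h
      exact h0 (Polynomial.derivative_eq_zero.1 h)
    · have := Polynomial.natDegree_derivative_lt h0
      omega
    · have key := aux_comm_aeval x a y hy hc p
      have hcq : ∀ q : Polynomial F, Commute (y ^ m) (Polynomial.aeval a q) := by
        intro q
        refine Commute.pow_left ?_ m
        induction q using Polynomial.induction_on' with
        | add p q hp hq => rw [map_add]; exact hp.add_right hq
        | monomial n c =>
          rw [Polynomial.aeval_monomial]
          exact Commute.mul_right (Algebra.commutes c y).symm (hc.pow_right n)
      have hcp := hcq p
      have hcp' := hcq (Polynomial.derivative p)
      calc Polynomial.aeval a (Polynomial.derivative p) * y ^ (m + 1 + m)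
          = y ^ m * (Polynomial.aeval a (Polynomial.derivative p) * y) * y ^ m := by
            rw [← mul_assoc, hcp'.eq]
            simp only [mul_assoc]
            congr 1
            rw [← pow_succ', ← pow_add]; congr 1; omega
        _ = y ^ m * x * (Polynomial.aeval a p * y ^ m)
            - (y ^ m * Polynomial.aeval a p) * x * y ^ m := by
            rw [← key]; noncomm_ring
        _ = 0 := by rw [hcp.eq, hm]; simp

lemma aux_jacobson {F V : Type*} [Field F] [CharZero F] [AddCommGroup V] [Module F V]
    [FiniteDimensional F V] (x a : Module.End F V) 
    (hc : Commute ⁅x, a⁆ a) : IsNilpotent ⁅x, a⁆ := by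
  refine aux_jacobson_aux (F := F) x a _ (by rw [Ring.lie_def]) hc _ (minpoly F a) 
    (minpoly.ne_zero (Algebra.IsIntegral.isIntegral a)) le_rfl ⟨0, by simp⟩

section
variable {F L V : Type*} [Field F] [CharZero F] [LieRing L] [LieAlgebra F L]
  [AddCommGroup V] [Module F V] [FiniteDimensional F V] [LieRingModule L V] [LieModule F L V]


lemma aux_E [LieModule.IsIrreducible F L V] (P Q : LieIdeal F L)
    (h1 : ∀ y ∈ ⁅P, Q⁆, ∀ z ∈ ⁅P, Q⁆, Commute (LieModule.toEnd F L V y) (LieModule.toEnd F L V z))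
    (h2 : ∀ y ∈ ⁅P, Q⁆, ∀ z ∈ Q, Commute (LieModule.toEnd F L V y) (LieModule.toEnd F L V z)) :
    ⁅⁅P, Q⁆, (⊤ : LieSubmodule F L V)⁆ = ⊥ := by
  have hnil : ∀ y ∈ ⁅P, Q⁆, IsNilpotent (LieModule.toEnd F L V y) := by
    intro y hy
    have hy' := hy
    rw [← LieSubmodule.mem_toSubmodule, LieSubmodule.lieIdeal_oper_eq_linear_span'] at hy'
    have := Submodule.span_induction (p := fun y hy => y ∈ ⁅P, Q⁆ ∧ IsNilpotent (LieModule.toEnd F L V y))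
      ?_ ?_ ?_ ?_ hy'
    · exact this.2
    · rintro _ ⟨p, hp, q, hq, rfl⟩
      have hm : ⁅p, q⁆ ∈ ⁅P, Q⁆ := LieSubmodule.lie_mem_lie hp hq
      refine ⟨hm, ?_⟩
      rw [LieHom.map_lie]
      apply aux_jacobson
      rw [← LieHom.map_lie]
      exact h2 _ hm _ hq
    · simp
    · rintro u v - - ⟨hu, hu'⟩ ⟨hv, hv'⟩
      refine ⟨add_mem hu hv, ?_⟩
      rw [map_add]
      exact (h1 u hu v hv).isNilpotent_add hu' hv'
    · rintro c u - ⟨hu, hu'⟩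
      refine ⟨(⁅P, Q⁆).smul_mem c hu, ?_⟩
      rw [map_smul]
      exact hu'.smul c
  have hN : LieModule.IsNilpotent (⁅P, Q⁆ : LieIdeal F L) V := by
    rw [LieModule.isNilpotent_iff_forall' (R := F)]
    rintro ⟨y, hy⟩
    exact hnil y hy
  by_contra hne
  have htop : ⁅⁅P, Q⁆, (⊤ : LieSubmodule F L V)⁆ = ⊤ :=
    (IsSimpleOrder.eq_bot_or_eq_top _).resolve_left hne
  have hl : ∀ n, (⁅P, Q⁆ : LieIdeal F L).lcs V n = ⊤ := by
    intro n
    induction n with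
    | zero => simp
    | succ n ih => rw [LieIdeal.lcs_succ, ih, htop]
  obtain ⟨n, hn⟩ := (LieModule.isNilpotent_iff F _ _).1 hN
  have := LieIdeal.coe_lcs_eq (R := F) (M := V) (⁅P, Q⁆ : LieIdeal F L) n
  rw [hn, hl] at this
  simp only [LieSubmodule.top_toSubmodule, LieSubmodule.bot_toSubmodule] at this
  have hnt : Nontrivial (LieSubmodule F L V) := inferInstance
  exact bot_ne_top (α := LieSubmodule F L V) (by
    apply LieSubmodule.toSubmodule_injective; simpa using this.symm)

lemma aux_irred [LieModule.IsIrreducible F L V] (I : LieIdeal F L) (k : ℕ)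
    (hk : LieAlgebra.derivedSeriesOfIdeal F L k I = ⊥) :
    ⁅⁅(⊤ : LieIdeal F L), I⁆, (⊤ : LieSubmodule F L V)⁆ = ⊥ := by
  have act : ∀ J : LieIdeal F L, ⁅J, (⊤ : LieSubmodule F L V)⁆ = ⊥ →
      ∀ y ∈ J, LieModule.toEnd F L V y = 0 := by
    intro J hJ y hy
    ext v
    have : ⁅y, v⁆ ∈ ⁅J, (⊤ : LieSubmodule F L V)⁆ :=
      LieSubmodule.lie_mem_lie hy (LieSubmodule.mem_top v)
    rw [hJ] at this
    simpa using this
  have comm : ∀ x y : L, LieModule.toEnd F L V ⁅x, y⁆ = 0 → Commute (LieModule.toEnd F L V x) (LieModule.toEnd F L V y) := by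
    intro x y h
    rw [LieHom.map_lie, Ring.lie_def, sub_eq_zero] at h
    exact h
  have main : ∀ D : LieIdeal F L, ⁅⁅D, D⁆, (⊤ : LieSubmodule F L V)⁆ = ⊥ →
      ⁅⁅(⊤ : LieIdeal F L), D⁆, (⊤ : LieSubmodule F L V)⁆ = ⊥ := by
    intro D hD
    have hle : ⁅(⊤ : LieIdeal F L), D⁆ ≤ D := LieSubmodule.lie_le_right _ _
    have hc : ∀ y ∈ D, ∀ z ∈ D, Commute (LieModule.toEnd F L V y) (LieModule.toEnd F L V z) :=
      fun y hy z hz => comm _ _ (act _ hD _ (LieSubmodule.lie_mem_lie hy hz))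
    exact aux_E _ _ (fun y hy z hz => hc y (hle hy) z (hle hz)) (fun y hy z hz => hc y (hle hy) z hz)
  suffices h : ∀ n, ⁅LieAlgebra.derivedSeriesOfIdeal F L (n + 1) I, (⊤ : LieSubmodule F L V)⁆ = ⊥ →
      ⁅⁅(⊤ : LieIdeal F L), I⁆, (⊤ : LieSubmodule F L V)⁆ = ⊥ by
    refine h k ?_
    rw [LieAlgebra.derivedSeriesOfIdeal_succ, hk]
    simp
  intro n
  induction n with
  | zero =>
    intro h
    exact main I (by simpa [LieAlgebra.derivedSeriesOfIdeal_succ] using h)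
  | succ n ih =>
    intro h
    apply ih
    rw [LieAlgebra.derivedSeriesOfIdeal_succ] at h
    have h2 := act _ (main _ h)
    rw [LieAlgebra.derivedSeriesOfIdeal_succ] at h2 ⊢
    have hc : ∀ y ∈ ⁅LieAlgebra.derivedSeriesOfIdeal F L n I,
        LieAlgebra.derivedSeriesOfIdeal F L n I⁆, ∀ z : L,
        Commute (LieModule.toEnd F L V y) (LieModule.toEnd F L V z) :=
      fun y hy z => (comm _ _ (h2 _ (LieSubmodule.lie_mem_lie (LieSubmodule.mem_top z) hy))).symm
    exact aux_E _ _ (fun y hy z _ => hc y hy z) (fun y hy z _ => hc y hy z)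

end

lemma aux_nilp {F L : Type*} [Field F] [CharZero F] [LieRing L] [LieAlgebra F L]
    (I : LieIdeal F L) (k : ℕ) (hk : LieAlgebra.derivedSeriesOfIdeal F L k I = ⊥)
    {V : Type*} [AddCommGroup V] [Module F V] [FiniteDimensional F V] [LieRingModule L V]
    [LieModule F L V] :
    ∃ n, (⁅(⊤ : LieIdeal F L), I⁆ : LieIdeal F L).lcs V n = ⊥ := by
  set J : LieIdeal F L := ⁅(⊤ : LieIdeal F L), I⁆ with hJ
  -- every nonzero submodule shrinks
  have step : ∀ W : LieSubmodule F L V, W ≠ ⊥ → ⁅J, W⁆ < W := by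
    intro W hW
    refine lt_of_le_of_ne (LieSubmodule.lie_le_right _ _) ?_
    intro heq
    have hnt : Nontrivial W := (LieSubmodule.nontrivial_iff_ne_bot F L V).2 hW
    obtain ⟨W', hW'⟩ : ∃ W' : LieSubmodule F L W, IsCoatom W' := by
      obtain h | ⟨a, ha, -⟩ := eq_top_or_exists_le_coatom (⊥ : LieSubmodule F L W)
      · exact absurd h bot_ne_top
      · exact ⟨a, ha⟩
    have hirr : LieModule.IsIrreducible F L (W ⧸ W') := by
      have hq : Nontrivial (W ⧸ W') := by
        obtain ⟨m, hm⟩ : ∃ m, m ∉ W' := by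
          by_contra! h
          exact hW'.1 (eq_top_iff.2 fun m _ => h m)
        refine ⟨LieSubmodule.Quotient.mk' W' m, 0, ?_⟩
        rwa [Ne, LieSubmodule.Quotient.mk_eq_zero]
      refine LieModule.IsIrreducible.mk fun N hN => ?_
      have hlt : W' < N.comap (LieSubmodule.Quotient.mk' W') := by
        refine lt_of_le_of_ne ?_ ?_
        · intro m hm
          rw [LieSubmodule.mem_comap, (LieSubmodule.Quotient.mk_eq_zero W').2 hm]
          exact N.zero_mem
        · intro h
          apply hN
          rw [eq_bot_iff]
          intro q hq
          obtain ⟨m, rfl⟩ := LieSubmodule.Quotient.surjective_mk' W' q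
          rw [LieSubmodule.mem_bot, LieSubmodule.Quotient.mk_eq_zero, h]
          exact hq
      have ht := hW'.2 _ hlt
      rw [eq_top_iff]
      intro q _
      obtain ⟨m, rfl⟩ := LieSubmodule.Quotient.surjective_mk' W' q
      have : m ∈ N.comap (LieSubmodule.Quotient.mk' W') := by rw [ht]; exact LieSubmodule.mem_top m
      exact this
    have hz := aux_irred (V := W ⧸ W') I k hk
    have hle : ⁅J, (⊤ : LieSubmodule F L W)⁆ ≤ W' := by
      rw [LieSubmodule.lie_le_iff]
      intro x hx m _
      have : ⁅x, LieSubmodule.Quotient.mk' W' m⁆ ∈ ⁅J, (⊤ : LieSubmodule F L (W ⧸ W'))⁆ :=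
        LieSubmodule.lie_mem_lie hx (LieSubmodule.mem_top _)
      rw [hz, LieSubmodule.mem_bot, ← LieModuleHom.map_lie] at this
      exact (LieSubmodule.Quotient.mk_eq_zero W').1 this
    have htop : ⁅J, (⊤ : LieSubmodule F L W)⁆ = ⊤ := by
      apply LieSubmodule.map_injective_of_injective (f := W.incl) Subtype.val_injective
      rw [LieSubmodule.map_bracket_eq]
      simpa using heq
    exact hW'.1 (top_le_iff.1 (htop ▸ hle))
  have hanti : Antitone (fun n => J.lcs V n) := by
    refine antitone_nat_of_succ_le fun n => ?_
    simp only [LieIdeal.lcs_succ]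
    exact LieSubmodule.lie_le_right _ _
  have hwf : WellFoundedLT (LieSubmodule F L V) := LieSubmodule.wellFoundedLT_of_isArtinian F L V
  obtain ⟨n, hn⟩ := WellFoundedGT.monotone_chain_condition (α := (LieSubmodule F L V)ᵒᵈ)
    ⟨fun n => OrderDual.toDual (J.lcs V n), fun a b h => hanti h⟩
  refine ⟨n, ?_⟩
  by_contra hne
  have h1 := step _ hne
  rw [← LieIdeal.lcs_succ] at h1
  exact h1.ne' (hn (n + 1) (Nat.le_succ n))

end LieHelpers

section LeibnizHelpers

variable {F A : Type*} [Field F] [AddCommGroup A] [Module F A]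
  (mul : A →ₗ[F] A →ₗ[F] A)

lemma aux_mem_mulSub {B C : Submodule F A} {b c : A} (hb : b ∈ B) (hc : c ∈ C) :
    mul b c ∈ mulSub mul B C :=
  Submodule.subset_span ⟨b, hb, c, hc, rfl⟩

lemma aux_mulSub_le {B C D : Submodule F A} :
    mulSub mul B C ≤ D ↔ ∀ b ∈ B, ∀ c ∈ C, mul b c ∈ D := by
  constructor
  · intro h b hb c hc
    exact h (aux_mem_mulSub mul hb hc)
  · intro h
    refine Submodule.span_le.2 ?_
    rintro _ ⟨b, hb, c, hc, rfl⟩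
    exact h b hb c hc

lemma aux_mulSub_mono {B C B' C' : Submodule F A} (hB : B ≤ B') (hC : C ≤ C') :
    mulSub mul B C ≤ mulSub mul B' C' :=
  (aux_mulSub_le mul).2 fun _ hb _ hc => aux_mem_mulSub mul (hB hb) (hC hc)

lemma aux_ds_succ_le {P R : Submodule F A} (h : mulSub mul P P ≤ R) (n : ℕ) :
    ds mul P (n + 1) ≤ ds mul R n := by
  induction n with
  | zero => exact h
  | succ n ih => exact aux_mulSub_mono mul ih ih

lemma aux_solvable_of_sq {P R : Submodule F A} (h : mulSub mul P P ≤ R)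
    (hR : IsSolvableSub mul R) : IsSolvableSub mul P := by
  obtain ⟨m, hm⟩ := hR
  exact ⟨m + 1, le_bot_iff.1 (hm ▸ aux_ds_succ_le mul h m)⟩

lemma aux_ds_le_lcs {N : Submodule F A} (hN : IsSubalg mul N) (n : ℕ) :
    ds mul N n ≤ N ∧ ds mul N n ≤ lcs mul N n := by
  induction n with
  | zero => exact ⟨le_rfl, le_rfl⟩
  | succ n ih =>
    exact ⟨(aux_mulSub_le mul).2 fun b hb c hc => hN b (ih.1 hb) c (ih.1 hc),
      aux_mulSub_mono mul ih.1 ih.2⟩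


lemma aux_ideal_sq (hleib : ∀ x y z : A, mul x (mul y z) = mul (mul x y) z + mul y (mul x z))
    {I S : Submodule F A} (hI : IsIdealIn mul I S) :
    IsIdealIn mul (mulSub mul I I) S := by
  refine ⟨(aux_mulSub_le mul).2 fun b hb c hc => hI.1 (hI.2 b (hI.1 hb) c hc).1, ?_⟩
  intro x hx y hy
  have h1 : mulSub mul I I ≤ (mulSub mul I I).comap (mul x) := by
    rw [aux_mulSub_le]
    intro b hb c hc
    rw [Submodule.mem_comap, hleib]
    exact add_mem (aux_mem_mulSub mul (hI.2 x hx b hb).1 hc)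
      (aux_mem_mulSub mul hb (hI.2 x hx c hc).1)
  have h2 : mulSub mul I I ≤ (mulSub mul I I).comap (mul.flip x) := by
    rw [aux_mulSub_le]
    intro b hb c hc
    rw [Submodule.mem_comap, LinearMap.flip_apply, ← add_sub_cancel_right (mul (mul b c) x)
      (mul c (mul b x)), ← hleib]
    exact sub_mem (aux_mem_mulSub mul hb (hI.2 x hx c hc).2)
      (aux_mem_mulSub mul hc (hI.2 x hx b hb).2)
  exact ⟨h1 hy, h2 hy⟩

lemma aux_ds_ideal (hleib : ∀ x y z : A, mul x (mul y z) = mul (mul x y) z + mul y (mul x z))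
    {I S : Submodule F A} (hI : IsIdealIn mul I S) (n : ℕ) :
    IsIdealIn mul (ds mul I n) S := by
  induction n with
  | zero => exact hI
  | succ n ih => exact aux_ideal_sq mul hleib ih

/-- iterated Leibniz rule -/
lemma aux_leibniz_iter (D : A →ₗ[F] A) (hD : ∀ y z, D (mul y z) = mul (D y) z + mul y (D z))
    (n : ℕ) (y z : A) :
    (D ^ n) (mul y z) = ∑ p ∈ Finset.HasAntidiagonal.antidiagonal n,
      n.choose p.1 • mul ((D ^ p.1) y) ((D ^ p.2) z) := by
  induction n with
  | zero => simp
  | succ n ih =>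
    rw [Finset.sum_antidiagonal_choose_succ_nsmul
      (fun i j => mul ((D ^ i) y) ((D ^ j) z)) n, pow_succ', Module.End.mul_apply, ih, map_sum,
      ← Finset.sum_add_distrib]
    refine Finset.sum_congr rfl fun p hp => ?_
    have hs : n.choose p.2 = n.choose p.1 := by
      rw [Finset.HasAntidiagonal.mem_antidiagonal] at hp
      exact Nat.choose_symm_of_eq_add (by omega)
    rw [map_nsmul, hD, pow_succ', pow_succ', Module.End.mul_apply, Module.End.mul_apply, hs,
      nsmul_add, add_comm]

lemma aux_rad_left [CharZero F]
    (hleib : ∀ x y z : A, mul x (mul y z) = mul (mul x y) z + mul y (mul x z))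
    {B R : Submodule F A} (hR : IsRadicalIn mul B R)
    (D : A →ₗ[F] A) (hD : ∀ y z, D (mul y z) = mul (D y) z + mul y (D z))
    (hDB : ∀ b ∈ B, D b ∈ B) : ∀ r ∈ R, D r ∈ R := by
  obtain ⟨hRI, ⟨m, hm⟩, hmax⟩ := hR
  have hDB' : ∀ n, ∀ b ∈ B, (D ^ n) b ∈ B := by
    intro n
    induction n with
    | zero => intro b hb; simpa using hb
    | succ n ih => intro b hb; rw [pow_succ', Module.End.mul_apply]; exact hDB _ (ih b hb)
  have step : ∀ k, (∀ j, ∀ t ∈ ds mul R (k + 1), (D ^ j) t ∈ R) →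
      ∀ j, ∀ t ∈ ds mul R k, (D ^ j) t ∈ R := by
    intro k hk j
    have hT := aux_ds_ideal mul hleib hRI k
    induction j using Nat.strong_induction_on with
    | _ j ih =>
    have hRle : ∀ r ∈ R, r ∈ R ⊔ (ds mul R k).map (D ^ j) := fun r hr => Submodule.mem_sup_left hr
    -- products of `D ^ j t` with elements of `B`
    have e1 : ∀ t ∈ ds mul R k, ∀ b ∈ B, mul ((D ^ j) t) b ∈ R ⊔ (ds mul R k).map (D ^ j) := by
      intro t ht b hb
      have hform := aux_leibniz_iter mul D hD j t b
      rw [← Finset.add_sum_erase _ _ (show (j, 0) ∈ Finset.HasAntidiagonal.antidiagonal j by simp)] at hform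
      simp only [Nat.choose_self, one_nsmul, pow_zero, Module.End.one_apply] at hform
      rw [← sub_eq_iff_eq_add] at hform
      rw [← hform]
      refine sub_mem (Submodule.mem_sup_right (Submodule.mem_map_of_mem (hT.2 b hb t ht).2)) ?_
      refine sum_mem fun p hp => hRle _ (nsmul_mem ?_ _)
      rw [Finset.mem_erase, Finset.HasAntidiagonal.mem_antidiagonal] at hp
      have hlt : p.1 < j := by
        rcases p with ⟨p, q⟩
        simp only [ne_eq, Prod.mk.injEq, not_and] at hp
        simp only; omega
      exact (hRI.2 _ (hDB' _ _ hb) _ (ih _ hlt t ht)).2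
    have e2 : ∀ t ∈ ds mul R k, ∀ b ∈ B, mul b ((D ^ j) t) ∈ R ⊔ (ds mul R k).map (D ^ j) := by
      intro t ht b hb
      have hform := aux_leibniz_iter mul D hD j b t
      rw [← Finset.add_sum_erase _ _ (show (0, j) ∈ Finset.HasAntidiagonal.antidiagonal j by simp)] at hform
      simp only [Nat.choose_zero_right, one_nsmul, pow_zero, Module.End.one_apply] at hform
      rw [← sub_eq_iff_eq_add] at hform
      rw [← hform]
      refine sub_mem (Submodule.mem_sup_right (Submodule.mem_map_of_mem (hT.2 b hb t ht).1)) ?_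
      refine sum_mem fun p hp => hRle _ (nsmul_mem ?_ _)
      rw [Finset.mem_erase, Finset.HasAntidiagonal.mem_antidiagonal] at hp
      have hlt : p.2 < j := by
        rcases p with ⟨p, q⟩
        simp only [ne_eq, Prod.mk.injEq, not_and] at hp
        simp only; omega
      exact (hRI.2 _ (hDB' _ _ hb) _ (ih _ hlt t ht)).1
    have e3 : ∀ t ∈ ds mul R k, ∀ s ∈ ds mul R k, mul ((D ^ j) t) ((D ^ j) s) ∈ R := by
      intro t ht s hs
      have hform := aux_leibniz_iter mul D hD (j + j) t s
      rw [← Finset.add_sum_erase _ _ (show (j, j) ∈ Finset.HasAntidiagonal.antidiagonal (j + j) by simp)] at hform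
      simp only at hform
      rw [← sub_eq_iff_eq_add] at hform
      have hmem : (j + j).choose j • mul ((D ^ j) t) ((D ^ j) s) ∈ R := by
        rw [← hform]
        refine sub_mem (hk _ _ (aux_mem_mulSub mul ht hs)) (sum_mem fun p hp => nsmul_mem ?_ _)
        rw [Finset.mem_erase, Finset.HasAntidiagonal.mem_antidiagonal] at hp
        have hlt : p.1 < j ∨ p.2 < j := by
          rcases p with ⟨p, q⟩
          simp only [ne_eq, Prod.mk.injEq, not_and] at hp
          simp only; omega
        rcases hlt with hlt | hlt
        · exact (hRI.2 _ (hDB' _ _ (hT.1 hs)) _ (ih _ hlt t ht)).2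
        · exact (hRI.2 _ (hDB' _ _ (hT.1 ht)) _ (ih _ hlt s hs)).1
      rw [← Nat.cast_smul_eq_nsmul F] at hmem
      refine (Submodule.smul_mem_iff R ?_).1 hmem
      exact_mod_cast (Nat.choose_pos (Nat.le_add_left j j)).ne'
    have hPB : R ⊔ (ds mul R k).map (D ^ j) ≤ B := by
      refine sup_le hRI.1 ?_
      rintro _ ⟨t, ht, rfl⟩
      exact hDB' _ _ (hT.1 ht)
    have hP : IsIdealIn mul (R ⊔ (ds mul R k).map (D ^ j)) B := by
      refine ⟨hPB, ?_⟩
      intro x hx y hy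
      obtain ⟨r, hr, _, ⟨t, ht, rfl⟩, rfl⟩ := Submodule.mem_sup.1 hy
      simp only [map_add, LinearMap.add_apply]
      exact ⟨add_mem (hRle _ (hRI.2 x hx r hr).1) (e2 t ht x hx),
        add_mem (hRle _ (hRI.2 x hx r hr).2) (e1 t ht x hx)⟩
    have hsq : mulSub mul (R ⊔ (ds mul R k).map (D ^ j)) (R ⊔ (ds mul R k).map (D ^ j)) ≤ R := by
      rw [aux_mulSub_le]
      intro b hb c hc
      obtain ⟨r, hr, _, ⟨t, ht, rfl⟩, rfl⟩ := Submodule.mem_sup.1 hb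
      have hcB := hPB hc
      rw [map_add, LinearMap.add_apply]
      refine add_mem (hRI.2 _ hcB r hr).2 ?_
      obtain ⟨r', hr', _, ⟨s, hs, rfl⟩, rfl⟩ := Submodule.mem_sup.1 hc
      rw [map_add]
      exact add_mem (hRI.2 _ (hDB' _ _ (hT.1 ht)) r' hr').1 (e3 t ht s hs)
    have hle := hmax _ hP (aux_solvable_of_sq mul hsq ⟨m, hm⟩)
    intro t ht
    exact hle (Submodule.mem_sup_right (Submodule.mem_map_of_mem ht))
  have all : ∀ i, i ≤ m → ∀ j, ∀ t ∈ ds mul R (m - i), (D ^ j) t ∈ R := by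
    intro i
    induction i with
    | zero =>
      intro _ j t ht
      rw [Nat.sub_zero, hm, Submodule.mem_bot] at ht
      rw [ht, map_zero]; exact R.zero_mem
    | succ i ih =>
      intro hi
      refine step _ ?_
      rw [show m - (i + 1) + 1 = m - i by omega]
      exact ih (by omega)
  intro r hr
  have := all m le_rfl 1 r (by rw [Nat.sub_self]; exact hr)
  simpa using this

lemma aux_rad_ideal [CharZero F]
    (hleib : ∀ x y z : A, mul x (mul y z) = mul (mul x y) z + mul y (mul x z))
    {B R : Submodule F A} (hB : IsIdealIn mul B ⊤) (hR : IsRadicalIn mul B R) :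
    IsIdealIn mul R ⊤ := by
  have hleft : ∀ a, ∀ r ∈ R, mul a r ∈ R := fun a =>
    aux_rad_left mul hleib hR (mul a) (fun y z => hleib a y z)
      (fun b hb => (hB.2 a Submodule.mem_top b hb).1)
  let K : Submodule F A := B ⊓ LinearMap.ker mul
  have hK : K ≤ R := by
    refine hR.2.2 K ⟨inf_le_left, ?_⟩ ⟨1, ?_⟩
    · rintro x hx y ⟨hy, hy'⟩
      have hy0 : mul y = 0 := hy'
      refine ⟨⟨(hB.2 x Submodule.mem_top y hy).1, ?_⟩, ?_⟩
      · change mul (mul x y) = 0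
        ext z
        have := hleib x y z
        simp only [hy0, LinearMap.zero_apply, map_zero, add_zero] at this
        simpa using this.symm
      · rw [hy0]; exact K.zero_mem
    · rw [eq_bot_iff]
      refine (aux_mulSub_le mul).2 ?_
      rintro b ⟨-, hb⟩ c -
      have hb0 : mul b = 0 := hb
      rw [hb0]; simp
  refine ⟨le_top, fun x _ r hr => ⟨hleft x r hr, ?_⟩⟩
  have hrB := hR.1.1 hr
  have hk : mul r x + mul x r ∈ R := by
    refine hK ⟨add_mem (hB.2 x Submodule.mem_top r hrB).2 (hB.2 x Submodule.mem_top r hrB).1, ?_⟩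
    change mul (mul r x + mul x r) = 0
    ext z
    rw [map_add, LinearMap.add_apply, LinearMap.zero_apply]
    have h1 := hleib r x z
    have h2 := hleib x r z
    rw [h2] at h1
    have h3 : mul r (mul x z) + 0 = mul r (mul x z) + (mul (mul r x) z + mul (mul x r) z) := by
      rw [add_zero]; nth_rewrite 1 [h1]; abel
    exact (add_left_cancel h3).symm
  have := sub_mem hk (hleft x r hr)
  simpa using this

/-- The Lie algebra of left multiplications. -/
def auxL (hleib : ∀ x y z : A, mul x (mul y z) = mul (mul x y) z + mul y (mul x z)) :
    LieSubalgebra F (Module.End F A) :=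
  { LinearMap.range mul with
    lie_mem' := by
      rintro _ _ ⟨x, rfl⟩ ⟨y, rfl⟩
      refine ⟨mul x y, ?_⟩
      ext z
      rw [Ring.lie_def]
      have := hleib x y z
      simp only [LinearMap.sub_apply, Module.End.mul_apply]
      rw [this]; abel }

/-- Left multiplication as an element of `auxL`. -/
def auxl (hleib : ∀ x y z : A, mul x (mul y z) = mul (mul x y) z + mul y (mul x z)) (x : A) :
    auxL mul hleib := ⟨mul x, x, rfl⟩

lemma auxl_lie (hleib : ∀ x y z : A, mul x (mul y z) = mul (mul x y) z + mul y (mul x z))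
    (x y : A) : ⁅auxl mul hleib x, auxl mul hleib y⁆ = auxl mul hleib (mul x y) := by
  apply Subtype.ext
  ext z
  change (⁅mul x, mul y⁆ : Module.End F A) z = mul (mul x y) z
  have := hleib x y z
  rw [Ring.lie_def]
  simp only [LinearMap.sub_apply, Module.End.mul_apply]
  rw [this]; abel

/-- The image of an ideal in `auxL`. -/
def auxI (hleib : ∀ x y z : A, mul x (mul y z) = mul (mul x y) z + mul y (mul x z))
    (I : Submodule F A) (hI : IsIdealIn mul I ⊤) : LieIdeal F (auxL mul hleib) :=
  { (I.map mul).comap (auxL mul hleib).toSubmodule.subtype with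
    lie_mem := by
      rintro ⟨_, x, rfl⟩ ⟨_, _⟩ ⟨y, hy, rfl⟩
      refine ⟨mul x y, (hI.2 x Submodule.mem_top y hy).1, ?_⟩
      exact (congrArg Subtype.val (auxl_lie mul hleib x y)).symm }

lemma aux_mem_auxI (hleib : ∀ x y z : A, mul x (mul y z) = mul (mul x y) z + mul y (mul x z))
    (I : Submodule F A) (hI : IsIdealIn mul I ⊤) (f : auxL mul hleib) :
    f ∈ auxI mul hleib I hI ↔ ∃ y ∈ I, auxl mul hleib y = f := by
  constructor
  · rintro ⟨y, hy, h⟩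
    exact ⟨y, hy, Subtype.ext h⟩
  · rintro ⟨y, hy, rfl⟩
    exact ⟨y, hy, rfl⟩

lemma aux_derived_le
    (hleib : ∀ x y z : A, mul x (mul y z) = mul (mul x y) z + mul y (mul x z))
    (I : Submodule F A) (hI : IsIdealIn mul I ⊤) (n : ℕ) :
    LieAlgebra.derivedSeriesOfIdeal F (auxL mul hleib) n (auxI mul hleib I hI) ≤
      auxI mul hleib (ds mul I n) (aux_ds_ideal mul hleib hI n) := by
  induction n with
  | zero => exact le_rfl
  | succ n ih =>
    rw [LieAlgebra.derivedSeriesOfIdeal_succ, LieSubmodule.lie_le_iff]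
    intro f hf g hg
    obtain ⟨x, hx, rfl⟩ := (aux_mem_auxI _ _ _ _ _).1 (ih hf)
    obtain ⟨y, hy, rfl⟩ := (aux_mem_auxI _ _ _ _ _).1 (ih hg)
    rw [auxl_lie]
    exact (aux_mem_auxI _ _ _ _ _).2 ⟨_, aux_mem_mulSub mul hx hy, rfl⟩

lemma aux_fSub_nilpotent [CharZero F] [FiniteDimensional F A]
    (hleib : ∀ x y z : A, mul x (mul y z) = mul (mul x y) z + mul y (mul x z))
    (R : Submodule F A) (hI : IsIdealIn mul R ⊤) (hs : IsSolvableSub mul R) :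
    IsNilpotentSub mul (fSub mul ⊤ R) := by
  obtain ⟨m, hm⟩ := hs
  have hbot : LieAlgebra.derivedSeriesOfIdeal F (auxL mul hleib) m (auxI mul hleib R hI) = ⊥ := by
    rw [eq_bot_iff]
    intro f hf
    obtain ⟨y, hy, rfl⟩ := (aux_mem_auxI _ _ _ _ _).1 (aux_derived_le mul hleib R hI m hf)
    rw [hm, Submodule.mem_bot] at hy
    rw [LieSubmodule.mem_bot]
    apply Subtype.ext
    change mul y = 0
    rw [hy, map_zero]
  obtain ⟨n, hn⟩ := aux_nilp (auxI mul hleib R hI) m hbot (V := A)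
  refine ⟨n, ?_⟩
  have hT : fSub mul ⊤ R ≤ (LieSubmodule.toSubmodule
      (⁅(⊤ : LieIdeal F (auxL mul hleib)), auxI mul hleib R hI⁆)).comap
      ((mul.codRestrict (auxL mul hleib).toSubmodule fun x => ⟨x, rfl⟩ : A →ₗ[F] auxL mul hleib)) := by
    refine sup_le ((aux_mulSub_le mul).2 ?_) ((aux_mulSub_le mul).2 ?_)
    · intro x _ r hr
      change auxl mul hleib (mul x r) ∈ ⁅(⊤ : LieIdeal F (auxL mul hleib)), auxI mul hleib R hI⁆
      rw [← auxl_lie]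
      exact LieSubmodule.lie_mem_lie (LieSubmodule.mem_top _)
        ((aux_mem_auxI _ _ _ _ _).2 ⟨r, hr, rfl⟩)
    · intro r hr x _
      change auxl mul hleib (mul r x) ∈ ⁅(⊤ : LieIdeal F (auxL mul hleib)), auxI mul hleib R hI⁆
      rw [← auxl_lie, LieSubmodule.lie_comm]
      exact LieSubmodule.lie_mem_lie ((aux_mem_auxI _ _ _ _ _).2 ⟨r, hr, rfl⟩)
        (LieSubmodule.mem_top _)
  have hl : ∀ k, lcs mul (fSub mul ⊤ R) k ≤ LieSubmodule.toSubmodule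
      ((⁅(⊤ : LieIdeal F (auxL mul hleib)), auxI mul hleib R hI⁆ :
        LieIdeal F (auxL mul hleib)).lcs A k) := by
    intro k
    induction k with
    | zero => simp
    | succ k ih =>
      refine (aux_mulSub_le mul).2 fun t ht c hc => ?_
      rw [LieIdeal.lcs_succ]
      exact LieSubmodule.lie_mem_lie (x := auxl mul hleib t) (hT ht) (ih hc)
  have := hl n
  rw [hn] at this
  exact le_bot_iff.1 this

end LeibnizHelpers

/-- over characteristic zero, if `B ◁ A`, `R = rad(B)`,
`N = nilrad(B)`, then `R` and `N` are ideals of `A` and `A·R + R·A ⊆ N`. -/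
theorem stmt_13 {F A : Type*} [Field F] [CharZero F]
    [AddCommGroup A] [Module F A] [FiniteDimensional F A]
    (mul : A →ₗ[F] A →ₗ[F] A)
    (hleib : ∀ x y z : A, mul x (mul y z) = mul (mul x y) z + mul y (mul x z))
    (B R N : Submodule F A)
    (hB : IsIdealIn mul B ⊤)
    (hR : IsRadicalIn mul B R) (hN : IsNilradicalIn mul B N) :
    IsIdealIn mul R ⊤ ∧ IsIdealIn mul N ⊤ ∧ fSub mul ⊤ R ≤ N := by
  have hRI := aux_rad_ideal mul hleib hB hR
  have hmem : ∀ x : A, ∀ r ∈ R, mul x r ∈ fSub mul ⊤ R ∧ mul r x ∈ fSub mul ⊤ R := fun x r hr =>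
    ⟨Submodule.mem_sup_left (aux_mem_mulSub mul Submodule.mem_top hr),
      Submodule.mem_sup_right (aux_mem_mulSub mul hr Submodule.mem_top)⟩
  have hTR : fSub mul ⊤ R ≤ R :=
    sup_le ((aux_mulSub_le mul).2 fun x hx r hr => (hRI.2 x hx r hr).1)
      ((aux_mulSub_le mul).2 fun r hr x hx => (hRI.2 x hx r hr).2)
  have hTN : fSub mul ⊤ R ≤ N :=
    hN.2.2 _ ⟨hTR.trans hR.1.1, fun x _ y hy => hmem x y (hTR hy)⟩
      (aux_fSub_nilpotent mul hleib R hRI hR.2.1)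
  have hNR : N ≤ R := by
    refine hR.2.2 N hN.1 ?_
    obtain ⟨m, hm⟩ := hN.2.1
    exact ⟨m, le_bot_iff.1 (hm ▸ (aux_ds_le_lcs mul
      (fun x hx y hy => (hN.1.2 x (hN.1.1 hx) y hy).1) m).2)⟩
  exact ⟨hRI, ⟨le_top, fun x _ y hy => ⟨hTN (hmem x y (hNR hy)).1, hTN (hmem x y (hNR hy)).2⟩⟩, hTN⟩
end

section
/- Let A be a finite-dimensional left Leibniz algebra over a field F of characteristic zero and let M be a nilpotent subinvariant subalgebra of A. Then M ⊆ nilrad(A). -/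
open Submodule

section Helpers

variable {F : Type*} {V : Type*} [Field F] [AddCommGroup V] [Module F V]

theorem aux_flag_nilp (W : ℕ → Submodule F V) (n : ℕ) (h0 : W 0 = ⊤) (hn : W n = ⊥)
    (f : Module.End F V) (hf : ∀ k, ∀ v ∈ W k, f v ∈ W (k + 1)) : IsNilpotent f := by
  refine ⟨n, ?_⟩
  have h : ∀ k, ∀ v, (f ^ k) v ∈ W k := by
    intro k
    induction k with
    | zero => intro v; simp [h0]
    | succ k ih =>
      intro v
      rw [pow_succ', Module.End.mul_apply]
      exact hf k _ (ih v)
  ext v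
  have := h n v
  rw [hn] at this
  simpa using this

theorem aux_trace_zero [FiniteDimensional F V] (f : Module.End F V) (hf : IsNilpotent f) :
    LinearMap.trace F V f = 0 :=
  (LinearMap.isNilpotent_trace_of_isNilpotent hf).eq_zero

/-- Trace criterion for nilpotency. -/
theorem aux_nilp_of_trace [CharZero F] [FiniteDimensional F V] (E : Subalgebra F (Module.End F V))
    (y : Module.End F V) (hy : y ∈ E) (h : ∀ a ∈ E, LinearMap.trace F V (a * y) = 0) :
    IsNilpotent y := by
  classical
  have hne : minpoly F y ≠ 0 := minpoly.ne_zero (Algebra.IsIntegral.isIntegral y)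
  obtain ⟨q, hq, hdvd⟩ := Polynomial.exists_eq_pow_rootMultiplicity_mul_and_not_dvd
    (minpoly F y) hne 0
  set k := (minpoly F y).rootMultiplicity 0
  simp only [map_zero, sub_zero] at hq hdvd
  have hco : IsCoprime ((Polynomial.X : Polynomial F) ^ (k + 1)) q :=
    IsCoprime.pow_left ((Polynomial.irreducible_X.coprime_iff_not_dvd).2 hdvd)
  obtain ⟨u, v, huv⟩ := hco
  have hz : Polynomial.aeval y (Polynomial.X ^ (k + 1) * q) = 0 := by
    have : (Polynomial.X ^ (k + 1) * q : Polynomial F) = Polynomial.X * minpoly F y := by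
      rw [hq]; ring
    rw [this, map_mul, minpoly.aeval, mul_zero]
  set e := Polynomial.aeval y (u * Polynomial.X ^ (k + 1)) with he
  have hidem : IsIdempotentElem e := by
    have h1 : (u * Polynomial.X ^ (k + 1)) * (u * Polynomial.X ^ (k + 1)) =
      u * Polynomial.X ^ (k + 1) - u * v * (Polynomial.X ^ (k + 1) * q) := by
      have : u * Polynomial.X ^ (k + 1) = 1 - v * q := by rw [← huv]; ring
      calc _ = u * Polynomial.X ^ (k + 1) * (1 - v * q) := by rw [this]
        _ = _ := by ring
    unfold IsIdempotentElem
    rw [he, ← map_mul, h1, map_sub, map_mul _ (u * v), hz, mul_zero, sub_zero]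
  have hmem : ∀ p : Polynomial F, Polynomial.aeval y p ∈ E := fun p => by
    have := (Polynomial.aeval (⟨y, hy⟩ : E) p).2
    have h5 := Polynomial.aeval_algHom_apply E.val (⟨y, hy⟩ : E) p
    have h6 : E.val (⟨y, hy⟩ : E) = y := rfl
    rw [h6] at h5
    rw [h5]; exact this
  have htr : LinearMap.trace F V e = 0 := by
    have : e = Polynomial.aeval y (u * Polynomial.X ^ k) * y := by
      rw [he, pow_succ, ← mul_assoc, map_mul, Polynomial.aeval_X]
    rw [this]
    exact h _ (hmem _)
  have he0 : e = 0 := LinearMap.IsIdempotentElem.eq_zero_of_trace_eq_zero hidem htr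
  refine ⟨k + 1, ?_⟩
  have h2 : (Polynomial.X ^ (k + 1) : Polynomial F) =
      Polynomial.X ^ (k + 1) * (u * Polynomial.X ^ (k + 1)) + v * (Polynomial.X ^ (k + 1) * q) := by
    calc (Polynomial.X ^ (k + 1) : Polynomial F)
        = Polynomial.X ^ (k + 1) * (u * Polynomial.X ^ (k + 1) + v * q) := by rw [huv, mul_one]
      _ = _ := by ring
  have h3 := congrArg (Polynomial.aeval y) h2
  rw [map_add, map_mul, map_mul _ v, hz, ← he, he0] at h3
  simpa using h3

/-- The trace radical of a subalgebra of endomorphisms. -/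
def trRad (E : Subalgebra F (Module.End F V)) : Set (Module.End F V) :=
  {y | y ∈ E ∧ ∀ a ∈ E, LinearMap.trace F V (a * y) = 0}

theorem trRad_left {E : Subalgebra F (Module.End F V)} {y a : Module.End F V}
    (hy : y ∈ trRad E) (ha : a ∈ E) : a * y ∈ trRad E :=
  ⟨E.mul_mem ha hy.1, fun b hb => by rw [← mul_assoc]; exact hy.2 _ (E.mul_mem hb ha)⟩

theorem trRad_comm {E : Subalgebra F (Module.End F V)} {y g : Module.End F V}
    (hy : y ∈ trRad E) (hg : ∀ a ∈ E, g * a - a * g ∈ E) : g * y - y * g ∈ trRad E := by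
  refine ⟨hg _ hy.1, fun b hb => ?_⟩
  have h := hy.2 _ (hg b hb)
  have e1 : b * (g * y - y * g) = - ((g * b - b * g) * y) + (g * (b * y) - (b * y) * g) := by
    noncomm_ring
  rw [e1, map_add, map_neg, h, map_sub, LinearMap.trace_mul_comm F g (b * y)]
  simp

/-- The descending flag of a set of endomorphisms. -/
def flagOf (S : Set (Module.End F V)) : ℕ → Submodule F V
  | 0 => ⊤
  | n + 1 => Submodule.span F {z | ∃ y ∈ S, ∃ v ∈ flagOf S n, y v = z}

theorem flagOf_step (S : Set (Module.End F V)) {y : Module.End F V} (hy : y ∈ S) (k : ℕ)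
    {v : V} (hv : v ∈ flagOf S k) : y v ∈ flagOf S (k + 1) :=
  Submodule.subset_span ⟨y, hy, v, hv, rfl⟩

theorem flagOf_stable (S : Set (Module.End F V)) {g : Module.End F V}
    (hg : ∀ y ∈ S, g * y - y * g ∈ S) (k : ℕ) : ∀ v ∈ flagOf S k, g v ∈ flagOf S k := by
  induction k with
  | zero => intro v _; exact Submodule.mem_top
  | succ k ih =>
    intro v hv
    refine Submodule.span_induction (p := fun v _ => g v ∈ flagOf S (k + 1)) ?_ ?_ ?_ ?_ hv
    · rintro _ ⟨y, hy, w, hw, rfl⟩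
      have : g (y w) = (g * y - y * g) w + y (g w) := by simp
      rw [this]
      exact Submodule.add_mem _ (flagOf_step S (hg y hy) k hw) (flagOf_step S hy k (ih w hw))
    · simp
    · intro a b _ _ ha hb; rw [map_add]; exact Submodule.add_mem _ ha hb
    · intro c a _ ha; rw [map_smul]; exact Submodule.smul_mem _ _ ha

/-- The trace radical as a left ideal. -/
def trIdeal (E : Subalgebra F (Module.End F V)) : Ideal E where
  carrier := {y | (y : Module.End F V) ∈ trRad E}
  add_mem' := by
    intro a b ha hb
    refine ⟨(a + b).2, fun c hc => ?_⟩
    have := ha.2 c hc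
    have := hb.2 c hc
    simp_all [mul_add]
  zero_mem' := ⟨(0 : E).2, fun c hc => by simp⟩
  smul_mem' := fun c x hx => trRad_left hx c.2

theorem flagOf_trRad [CharZero F] [FiniteDimensional F V] (E : Subalgebra F (Module.End F V)) :
    ∃ n, flagOf (trRad E) n = ⊥ := by
  have : IsArtinianRing E := IsArtinianRing.of_finite F E
  have hle : trIdeal E ≤ Ideal.jacobson ⊥ := by
    intro x hx
    rw [Ideal.mem_jacobson_iff]
    intro y
    have hyx : (y * x : E) ∈ trIdeal E := (trIdeal E).mul_mem_left y hx
    have hnil : IsNilpotent ((y * x : E) : Module.End F V) :=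
      aux_nilp_of_trace E _ (y * x).2 hyx.2
    have hnil' : IsNilpotent (y * x) := by
      obtain ⟨n, hn⟩ := hnil
      exact ⟨n, Subtype.ext (by simpa using hn)⟩
    obtain ⟨z, hz⟩ := hnil'.isUnit_add_one.exists_left_inv
    refine ⟨z, ?_⟩
    have : z * y * x + z - 1 = z * (y * x + 1) - 1 := by noncomm_ring
    rw [this, hz]; simp
  obtain ⟨n, hn⟩ := IsArtinianRing.isNilpotent_jacobson_bot (R := E)
  refine ⟨n, ?_⟩
  have key : ∀ k, flagOf (trRad E) k ≤
      Submodule.span F {z | ∃ y ∈ (Ideal.jacobson (⊥ : Ideal E)) ^ k, ∃ v : V,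
        (y : Module.End F V) v = z} := by
    intro k
    induction k with
    | zero =>
      intro v _
      exact Submodule.subset_span ⟨1, by rw [Submodule.pow_zero, Ideal.one_eq_top]; trivial, v, rfl⟩
    | succ k ih =>
      refine Submodule.span_le.2 ?_
      rintro _ ⟨y, hy, w, hw, rfl⟩
      have hyE : y ∈ E := hy.1
      refine Submodule.span_induction (p := fun w _ => y w ∈ _) ?_ ?_ ?_ ?_ (ih hw)
      · rintro _ ⟨z, hz, v, rfl⟩
        refine Submodule.subset_span ⟨⟨y, hyE⟩ * z, ?_, v, rfl⟩
        have hyJ := hle (show (⟨y, hyE⟩ : E) ∈ trIdeal E from hy)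
        rcases Nat.eq_zero_or_pos k with rfl | hk
        · rw [Nat.zero_add, Submodule.pow_one]
          rw [Ideal.jacobson_bot] at hyJ ⊢
          exact Ideal.mul_mem_right _ _ hyJ
        · rw [Submodule.pow_succ' _ hk.ne']
          exact Ideal.mul_mem_mul hyJ hz
      · simp
      · intro a b _ _ ha hb; rw [map_add]; exact Submodule.add_mem _ ha hb
      · intro c a _ ha; rw [map_smul]; exact Submodule.smul_mem _ _ ha
  rw [eq_bot_iff]
  refine (key n).trans (Submodule.span_le.2 ?_)
  rintro _ ⟨y, hy, v, rfl⟩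
  rw [hn] at hy
  have : y = 0 := by simpa using hy
  simp [this]

/-- If `g` normalises the generators then it normalises the generated algebra. -/
theorem aux_adjoin_comm (S : Set (Module.End F V)) (g : Module.End F V)
    (hg : ∀ s ∈ S, g * s - s * g ∈ Algebra.adjoin F S) :
    ∀ a ∈ Algebra.adjoin F S, g * a - a * g ∈ Algebra.adjoin F S := by
  intro a ha
  induction ha using Algebra.adjoin_induction with
  | mem x hx => exact hg x hx
  | algebraMap r =>
    rw [(Algebra.commutes r g).symm, sub_self]; exact Subalgebra.zero_mem _
  | add x y hx hy h1 h2 =>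
    have : g * (x + y) - (x + y) * g = (g * x - x * g) + (g * y - y * g) := by noncomm_ring
    rw [this]; exact Subalgebra.add_mem _ h1 h2
  | mul x y hx hy h1 h2 =>
    have : g * (x * y) - (x * y) * g = (g * x - x * g) * y + x * (g * y - y * g) := by
      noncomm_ring
    rw [this]
    exact Subalgebra.add_mem _ (Subalgebra.mul_mem _ h1 hy) (Subalgebra.mul_mem _ hx h2)

theorem aux_adjoin_stable (S : Set (Module.End F V)) (W : Submodule F V)
    (hS : ∀ s ∈ S, ∀ v ∈ W, s v ∈ W) :
    ∀ a ∈ Algebra.adjoin F S, ∀ v ∈ W, a v ∈ W := by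
  intro a ha
  induction ha using Algebra.adjoin_induction with
  | mem x hx => exact hS x hx
  | algebraMap r => intro v hv; simpa [Algebra.algebraMap_eq_smul_one] using W.smul_mem r hv
  | add x y hx hy h1 h2 => intro v hv; exact W.add_mem (h1 v hv) (h2 v hv)
  | mul x y hx hy h1 h2 => intro v hv; exact h1 _ (h2 v hv)

/-- Passing from the envelope of an ideal to the envelope of the bigger algebra. -/
theorem aux_step [CharZero F] [FiniteDimensional F V] (S T : Set (Module.End F V)) (hST : S ⊆ T)
    (hT : ∀ g ∈ T, ∀ s ∈ S, g * s - s * g ∈ S) :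
    trRad (Algebra.adjoin F S) ⊆ trRad (Algebra.adjoin F T) := by
  intro y hy
  obtain ⟨n, hn⟩ := flagOf_trRad (Algebra.adjoin F S)
  refine ⟨Algebra.adjoin_mono hST hy.1, fun a ha => aux_trace_zero _ ?_⟩
  refine aux_flag_nilp (flagOf (trRad (Algebra.adjoin F S))) n rfl hn _ ?_
  intro k v hv
  refine aux_adjoin_stable T _ ?_ a ha _ (flagOf_step _ hy k hv)
  intro g hg
  refine flagOf_stable _ (fun z hz => trRad_comm hz ?_) _
  exact aux_adjoin_comm S g fun s hs => Algebra.subset_adjoin (hT g hg s hs)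

end Helpers

/-- over characteristic zero, a nilpotent subinvariant subalgebra
is contained in the nilradical. -/
theorem stmt_14 {F A : Type*} [Field F] [CharZero F]
    [AddCommGroup A] [Module F A] [FiniteDimensional F A]
    (mul : A →ₗ[F] A →ₗ[F] A)
    (hleib : ∀ x y z : A, mul x (mul y z) = mul (mul x y) z + mul y (mul x z))
    (M N : Submodule F A)
    (hM : IsSubinvariantIn mul M ⊤) (hnil : IsNilpotentSub mul M)
    (hN : IsNilradicalIn mul ⊤ N) :
    M ≤ N := by
  obtain ⟨t, c, hc0, hct, hsub, hid⟩ := hM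
  obtain ⟨m, hm⟩ := hnil
  have hbr : ∀ x y, mul x * mul y - mul y * mul x = mul (mul x y) := by
    intro x y
    ext z
    simp [hleib x y z]
  let S : ℕ → Set (Module.End F A) := fun i => {f | ∃ x ∈ c i, mul x = f}
  -- M is contained in every c i
  have hMc : ∀ i ≤ t, M ≤ c i := by
    intro i
    induction i with
    | zero => intro _; rw [hc0]
    | succ i ih => intro hi; exact (ih (by omega)).trans (hid i (by omega)).1
  have hlcs : ∀ n, lcs mul M n ≤ M := by
    intro n
    induction n with
    | zero => exact le_rfl
    | succ n ih =>
      refine Submodule.span_le.2 ?_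
      rintro _ ⟨b, hb, d, hd, rfl⟩
      have := hsub 0 (Nat.zero_le _)
      rw [hc0] at this
      exact this b hb d (ih hd)
  -- base case
  have hbase : ∀ x ∈ M, mul x ∈ trRad (Algebra.adjoin F (S 0)) := by
    intro x hx
    refine ⟨Algebra.subset_adjoin ⟨x, by rwa [hc0], rfl⟩, fun a ha => aux_trace_zero _ ?_⟩
    let W : ℕ → Submodule F A := fun k => if k ≤ t then c (t - k) else lcs mul M (k - t)
    have hstep : ∀ y ∈ M, ∀ k, ∀ v ∈ W k, mul y v ∈ W (k + 1) := by
      intro y hy k v hv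
      simp only [W] at hv ⊢
      by_cases hk : k + 1 ≤ t
      · rw [if_pos hk]
        rw [if_pos (by omega)] at hv
        have h1 := (hid (t - (k + 1)) (by omega)).2 v
          (by rwa [show t - (k + 1) + 1 = t - k by omega]) y (hMc _ (by omega) hy)
        exact h1.2
      · rw [if_neg hk]
        by_cases hk2 : k ≤ t
        · rw [if_pos hk2] at hv
          have : k = t := by omega
          subst this
          rw [Nat.sub_self, hc0] at hv
          rw [show k + 1 - k = 0 + 1 by omega]
          exact Submodule.subset_span ⟨y, hy, v, hv, rfl⟩
        · rw [if_neg hk2] at hv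
          rw [show k + 1 - t = (k - t) + 1 by omega]
          exact Submodule.subset_span ⟨y, hy, v, hv, rfl⟩
    have hdec : ∀ k, W (k + 1) ≤ W k := by
      intro k
      simp only [W]
      by_cases hk : k + 1 ≤ t
      · rw [if_pos hk, if_pos (by omega)]
        have := (hid (t - (k + 1)) (by omega)).1
        rwa [show t - (k + 1) + 1 = t - k by omega] at this
      · rw [if_neg hk]
        by_cases hk2 : k ≤ t
        · rw [if_pos hk2]
          have : k = t := by omega
          subst this
          rw [Nat.sub_self, hc0]
          exact hlcs _
        · rw [if_neg hk2, show k + 1 - t = (k - t) + 1 by omega]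
          generalize k - t = j
          induction j with
          | zero => exact hlcs 1
          | succ j ih =>
            refine Submodule.span_le.2 ?_
            rintro _ ⟨b, hb, d, hd, rfl⟩
            exact Submodule.subset_span ⟨b, hb, d, ih hd, rfl⟩
    have hbot : lcs mul M (m + 1) = ⊥ := by
      rw [eq_bot_iff]
      refine Submodule.span_le.2 ?_
      rintro _ ⟨b, hb, d, hd, rfl⟩
      rw [hm] at hd
      have : d = 0 := by simpa using hd
      simp [this]
    refine aux_flag_nilp W (t + (m + 1)) ?_ ?_ _ ?_
    · simp [W, hct]
    · simp only [W]
      rw [if_neg (by omega), show t + (m + 1) - t = m + 1 by omega, hbot]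
    · intro k v hv
      refine aux_adjoin_stable (S 0) _ ?_ a ha _ (hstep x hx k v hv)
      rintro _ ⟨y, hy, rfl⟩ w hw
      exact hdec _ (hstep y (by rwa [hc0] at hy) _ w hw)
  have hall : ∀ i ≤ t, ∀ x ∈ M, mul x ∈ trRad (Algebra.adjoin F (S i)) := by
    intro i
    induction i with
    | zero => intro _; exact hbase
    | succ i ih =>
      intro hi x hx
      refine aux_step (S i) (S (i + 1)) ?_ ?_ (ih (by omega) x hx)
      · rintro _ ⟨y, hy, rfl⟩
        exact ⟨y, (hid i (by omega)).1 hy, rfl⟩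
      · rintro _ ⟨g, hg, rfl⟩ _ ⟨s, hs, rfl⟩
        exact ⟨mul g s, ((hid i (by omega)).2 g hg s hs).1, (hbr g s).symm⟩
  have hgen : ∀ x, mul x ∈ Algebra.adjoin F (S t) := fun x =>
    Algebra.subset_adjoin ⟨x, by rw [hct]; trivial, rfl⟩
  set E := Algebra.adjoin F (S t) with hE
  let K : Submodule F A :=
    { carrier := {x | mul x ∈ trRad E}
      add_mem' := by
        intro a b ha hb
        refine ⟨hgen _, fun e he => ?_⟩
        rw [map_add, mul_add, map_add, ha.2 e he, hb.2 e he, add_zero]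
      zero_mem' := ⟨hgen _, fun e he => by simp⟩
      smul_mem' := by
        intro r a ha
        refine ⟨hgen _, fun e he => ?_⟩
        rw [map_smul, mul_smul_comm, map_smul, ha.2 e he, smul_zero] }
  have hcomm : ∀ x, ∀ y ∈ K, mul (mul x y) ∈ trRad E := by
    intro x y hy
    rw [← hbr]
    refine trRad_comm hy fun a ha => ?_
    exact Subalgebra.sub_mem _ (Subalgebra.mul_mem _ (hgen x) ha)
      (Subalgebra.mul_mem _ ha (hgen x))
  have hKid : IsIdealIn mul K ⊤ := by
    refine ⟨le_top, fun x _ y hy => ⟨hcomm x y hy, ?_⟩⟩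
    have h1 : mul (mul y x) = - mul (mul x y) := by
      rw [← hbr, ← hbr]; abel
    have h2 := hcomm x y hy
    refine ⟨hgen _, fun e he => ?_⟩
    rw [h1, mul_neg, map_neg, h2.2 e he, neg_zero]
  have hKnil : IsNilpotentSub mul K := by
    obtain ⟨n, hn⟩ := flagOf_trRad E
    refine ⟨n, ?_⟩
    rw [eq_bot_iff, ← hn]
    clear hn
    induction n with
    | zero => exact le_top
    | succ n ih =>
      refine Submodule.span_le.2 ?_
      rintro _ ⟨b, hb, d, hd, rfl⟩
      exact flagOf_step _ hb n (ih hd)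
  exact fun x hx => hN.2.2 K hKid hKnil (hall t le_rfl x hx)
end

section
/- Let A be a finite-dimensional left Leibniz algebra over a field F of characteristic zero and let B be a subinvariant subalgebra of A. Then rad(B) = B ∩ rad(A) and nilrad(B) = B ∩ nilrad(A). -/
open Submodule

section Helpers

theorem iter_leib {F M : Type*} [Field F] [AddCommGroup M] [Module F M]
    (b : M →ₗ[F] M →ₗ[F] M) (D : M →ₗ[F] M)
    (hD : ∀ x y, D (b x y) = b (D x) y + b x (D y)) (n : ℕ) (x y : M) :
    (D ^ n) (b x y) = ∑ ij ∈ Finset.HasAntidiagonal.antidiagonal n,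
      (n.choose ij.1) • b ((D ^ ij.1) x) ((D ^ ij.2) y) := by
  induction n with
  | zero => simp
  | succ n ih =>
    rw [Finset.sum_antidiagonal_choose_succ_nsmul
      (M := M) (fun i j => b ((D ^ i) x) ((D ^ j) y)) n]
    rw [pow_succ', Module.End.mul_apply, ih, map_sum]
    simp only [map_nsmul, hD, nsmul_add, Finset.sum_add_distrib, pow_succ', Module.End.mul_apply]
    rw [add_comm]
    congr 1
    refine Finset.sum_congr rfl fun ij hij => ?_
    rw [Finset.HasAntidiagonal.mem_antidiagonal] at hij
    rw [Nat.choose_symm_of_eq_add hij.symm]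

variable {F E : Type*} [Field F] [AddCommGroup E] [Module F E]

theorem mulSub_le {b : E →ₗ[F] E →ₗ[F] E} {B C X : Submodule F E} :
    mulSub b B C ≤ X ↔ ∀ x ∈ B, ∀ y ∈ C, b x y ∈ X := by
  unfold mulSub
  rw [Submodule.span_le]
  constructor
  · intro h x hx y hy
    exact h ⟨x, hx, y, hy, rfl⟩
  · rintro h _ ⟨x, hx, y, hy, rfl⟩
    exact h x hx y hy

theorem mem_mulSub {b : E →ₗ[F] E →ₗ[F] E} {B C : Submodule F E} {x y : E}
    (hx : x ∈ B) (hy : y ∈ C) : b x y ∈ mulSub b B C :=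
  Submodule.subset_span ⟨x, hx, y, hy, rfl⟩

theorem ds_mono (b : E →ₗ[F] E →ₗ[F] E) {B C : Submodule F E} (h : B ≤ C) (n : ℕ) :
    ds b B n ≤ ds b C n := by
  induction n with
  | zero => exact h
  | succ n ih => exact mulSub_le.2 fun x hx y hy => mem_mulSub (ih hx) (ih hy)

theorem lcs_mono (b : E →ₗ[F] E →ₗ[F] E) {B C : Submodule F E} (h : B ≤ C) (n : ℕ) :
    lcs b B n ≤ lcs b C n := by
  induction n with
  | zero => exact h
  | succ n ih => exact mulSub_le.2 fun x hx y hy => mem_mulSub (h hx) (ih hy)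

theorem ds_add (b : E →ₗ[F] E →ₗ[F] E) (B : Submodule F E) (m n : ℕ) :
    ds b B (m + n) = ds b (ds b B m) n := by
  induction n with
  | zero => rfl
  | succ n ih =>
    change mulSub b (ds b B (m + n)) (ds b B (m + n)) = mulSub b _ _
    rw [ih]

/-- the solvable step -/
theorem solv_step [CharZero F] (b : E →ₗ[F] E →ₗ[F] E) (D : E →ₗ[F] E)
    (hD : ∀ x y, D (b x y) = b (D x) y + b x (D y)) (V W : Submodule F E)
    (hWV : W ≤ V) (hl : ∀ v ∈ V, ∀ w ∈ W, b v w ∈ W) (hr : ∀ v ∈ V, ∀ w ∈ W, b w v ∈ W)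
    (hDV : ∀ v ∈ V, D v ∈ V) (hs : IsSolvableSub b W) :
    IsSolvableSub b (W ⊔ W.map D) := by
  have hDn : ∀ n, ∀ v ∈ V, (D ^ n) v ∈ V := by
    intro n
    induction n with
    | zero => intro v hv; simpa using hv
    | succ n ih => intro v hv; rw [pow_succ', Module.End.mul_apply]; exact hDV _ (ih v hv)
  have hds : ∀ k, ds b W k ≤ W := by
    intro k
    induction k with
    | zero => exact le_rfl
    | succ k ih => exact mulSub_le.2 fun x hx y hy => hl _ (hWV (ih hx)) _ (ih hy)
  have h1 : ∀ k, ∀ u ∈ ds b W k, ∀ j < 2 ^ k, (D ^ j) u ∈ W := by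
    intro k
    induction k with
    | zero =>
      intro u hu j hj
      obtain rfl : j = 0 := by simpa using hj
      rw [pow_zero]
      exact hu
    | succ k ih =>
      intro u hu j hj
      have : ds b W (k + 1) ≤ W.comap (D ^ j) := by
        refine mulSub_le.2 fun x hx y hy => ?_
        rw [Submodule.mem_comap, iter_leib b D hD]
        refine Submodule.sum_mem _ fun ij hij => ?_
        rw [Finset.HasAntidiagonal.mem_antidiagonal] at hij
        refine Submodule.smul_of_tower_mem _ _ ?_
        rw [pow_succ] at hj
        by_cases hi : ij.1 < 2 ^ k
        · exact hr _ (hDn _ _ (hWV (hds k hy))) _ (ih _ hx _ hi)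
        · exact hl _ (hDn _ _ (hWV (hds k hx))) _ (ih _ hy _ (by omega))
      exact this hu
  have h2 : ∀ k, ds b (W ⊔ W.map D) k ≤ W ⊔ (ds b W k).map (D ^ (2 ^ k)) := by
    intro k
    induction k with
    | zero => simp [ds]
    | succ k ih =>
      refine mulSub_le.2 fun x hx y hy => ?_
      obtain ⟨w, hw, _, ⟨u, hu, rfl⟩, rfl⟩ := Submodule.mem_sup.1 (ih hx)
      obtain ⟨w', hw', _, ⟨u', hu', rfl⟩, rfl⟩ := Submodule.mem_sup.1 (ih hy)
      have hV := hDn (2 ^ k) _ (hWV (hds k hu))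
      have hV' := hDn (2 ^ k) _ (hWV (hds k hu'))
      simp only [map_add, LinearMap.add_apply]
      have key : b ((D ^ 2 ^ k) u) ((D ^ 2 ^ k) u') ∈
          W ⊔ (ds b W (k + 1)).map (D ^ (2 ^ (k + 1))) := by
        have e := iter_leib b D hD (2 ^ (k + 1)) u u'
        have hm : (2 ^ k, 2 ^ k) ∈ Finset.HasAntidiagonal.antidiagonal (2 ^ (k + 1)) := by
          rw [Finset.HasAntidiagonal.mem_antidiagonal, pow_succ]; dsimp only; omega
        rw [← Finset.add_sum_erase _ _ hm] at e
        have hc : ((2 ^ (k + 1)).choose (2 ^ k) : F) ≠ 0 := by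
          rw [Nat.cast_ne_zero]
          exact (Nat.choose_pos (Nat.pow_le_pow_right (by norm_num) (by omega))).ne'
        rw [← Submodule.smul_mem_iff _ hc, Nat.cast_smul_eq_nsmul, eq_sub_of_add_eq e.symm]
        refine Submodule.sub_mem _ (Submodule.mem_sup_right ⟨_, mem_mulSub hu hu', rfl⟩)
          (Submodule.mem_sup_left (Submodule.sum_mem _ fun ij hij => ?_))
        rw [Finset.mem_erase, Finset.HasAntidiagonal.mem_antidiagonal, pow_succ] at hij
        refine Submodule.smul_of_tower_mem _ _ ?_
        by_cases hi : ij.1 < 2 ^ k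
        · exact hr _ (hDn _ _ (hWV (hds k hu'))) _ (h1 k _ hu _ hi)
        · refine hl _ (hDn _ _ (hWV (hds k hu))) _ (h1 k _ hu' _ ?_)
          by_contra hj
          apply hij.1
          ext <;> dsimp only <;> omega
      refine Submodule.add_mem _ (Submodule.add_mem _ ?_ ?_) (Submodule.add_mem _ ?_ key)
      · exact Submodule.mem_sup_left (hl _ (hWV hw) _ hw')
      · exact Submodule.mem_sup_left (hl _ hV _ hw')
      · exact Submodule.mem_sup_left (hr _ hV' _ hw)
  obtain ⟨m, hm⟩ := hs
  refine ⟨m + m, ?_⟩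
  rw [ds_add, eq_bot_iff, ← hm]
  refine ds_mono b ?_ m
  simpa [hm] using h2 m

/-- the nilpotent step -/
theorem nil_step [CharZero F] {R : Type*} [Ring R] [Algebra F R] (D : R →ₗ[F] R)
    (hD : ∀ x y, D (x * y) = D x * y + x * D y) (V W : Submodule F R)
    (hWV : W ≤ V) (hl : ∀ v ∈ V, ∀ w ∈ W, v * w - w * v ∈ W)
    (hDV : ∀ v ∈ V, D v ∈ V) (hs : ∃ m, W ^ m = ⊥) :
    ∃ m, (W ⊔ W.map D) ^ m = ⊥ := by
  obtain ⟨m, hm⟩ := hs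
  set A := Algebra.adjoin F (V : Set R) with hA
  set U := Subalgebra.toSubmodule A with hU
  have hUU : U * U ≤ U := by
    rw [Submodule.mul_le]
    exact fun a ha c hc => A.mul_mem ha hc
  have hVU : V ≤ U := fun v hv => Algebra.subset_adjoin hv
  have h1U : (1 : Submodule F R) ≤ U := by
    rw [Submodule.one_le]; exact A.one_mem
  have hUW : U * W ≤ W * U := by
    rw [Submodule.mul_le]
    intro u hu
    have hu' : u ∈ A := hu
    induction hu' using Algebra.adjoin_induction with
    | mem v hv =>
      intro w hw
      have : v * w = (v * w - w * v) * 1 + w * v := by noncomm_ring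
      rw [this]
      exact add_mem (Submodule.mul_mem_mul (hl v hv w hw) A.one_mem)
        (Submodule.mul_mem_mul hw (hVU hv))
    | algebraMap r =>
      intro w hw
      rw [Algebra.commutes]
      exact Submodule.mul_mem_mul hw (A.algebraMap_mem r)
    | add x y hx hy ihx ihy =>
      intro w hw
      rw [add_mul]
      exact add_mem (ihx hx w hw) (ihy hy w hw)
    | mul x y hx hy ihx ihy =>
      intro w hw
      have h := ihy hy w hw
      rw [mul_assoc]
      refine Submodule.mul_induction_on h ?_ ?_
      · intro a ha c hc
        rw [← mul_assoc]
        have := Submodule.mul_mem_mul (ihx hx a ha) hc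
        rw [mul_assoc] at this
        exact (mul_le_mul_right hUU W) this
      · intro a c ha hc
        rw [mul_add]
        exact add_mem ha hc
  have hUWk : ∀ k, U * W ^ k ≤ W ^ k * U := by
    intro k
    induction k with
    | zero => simp
    | succ k ih =>
      calc U * W ^ (k + 1) = (U * W ^ k) * W := by rw [pow_succ, mul_assoc]
        _ ≤ (W ^ k * U) * W := by gcongr
        _ = W ^ k * (U * W) := by rw [mul_assoc]
        _ ≤ W ^ k * (W * U) := by gcongr
        _ = W ^ (k + 1) * U := by rw [pow_succ, mul_assoc]
  set I := W * U with hI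
  have hIU : I * U ≤ I := by rw [hI, mul_assoc]; gcongr
  have hUI : U * I ≤ I := by
    calc U * I = (U * W) * U := by rw [hI, mul_assoc]
      _ ≤ I * U := by gcongr
      _ ≤ I := hIU
  have hIk : ∀ k, I ^ k ≤ W ^ k * U := by
    intro k
    induction k with
    | zero => simpa using h1U
    | succ k ih =>
      calc I ^ (k + 1) = I * I ^ k := by rw [pow_succ']
        _ ≤ (W * U) * (W ^ k * U) := by gcongr
        _ = W * (U * W ^ k) * U := by simp only [mul_assoc]
        _ ≤ W * (W ^ k * U) * U := by exact mul_le_mul' (mul_le_mul' le_rfl (hUWk k)) le_rfl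
        _ = W ^ (k + 1) * (U * U) := by rw [pow_succ']; simp only [mul_assoc]
        _ ≤ W ^ (k + 1) * U := by gcongr
  have hDU : ∀ u ∈ U, D u ∈ U := by
    intro u hu
    have hu' : u ∈ A := hu
    induction hu' using Algebra.adjoin_induction with
    | mem v hv => exact hVU (hDV v hv)
    | algebraMap r =>
      have h1 : D 1 = 0 := by have := hD 1 1; simpa using this
      rw [Algebra.algebraMap_eq_smul_one, map_smul, h1, smul_zero]
      exact zero_mem _
    | add x y hx hy ihx ihy => rw [map_add]; exact add_mem (ihx hx) (ihy hy)
    | mul x y hx hy ihx ihy =>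
      rw [hD]
      exact add_mem (A.mul_mem (ihx hx) hy) (A.mul_mem hx (ihy hy))
  have hDn : ∀ n, ∀ v ∈ U, (D ^ n) v ∈ U := by
    intro n
    induction n with
    | zero => intro v hv; simpa using hv
    | succ n ih => intro v hv; rw [pow_succ', Module.End.mul_apply]; exact hDU _ (ih v hv)
  have hWU : W ≤ U := hWV.trans hVU
  have hWkU : ∀ k, W ^ k ≤ U := by
    intro k
    induction k with
    | zero => simpa using h1U
    | succ k ih => rw [pow_succ]; exact (mul_le_mul' ih hWU).trans hUU
  have mIr : ∀ {a c : R}, a ∈ I → c ∈ U → a * c ∈ I :=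
    fun ha hc => hIU (Submodule.mul_mem_mul ha hc)
  have mIl : ∀ {a c : R}, a ∈ U → c ∈ I → a * c ∈ I :=
    fun ha hc => hUI (Submodule.mul_mem_mul ha hc)
  have hWI : W ≤ I := fun w hw => by
    have := Submodule.mul_mem_mul hw (show (1 : R) ∈ U from A.one_mem)
    rwa [mul_one] at this
  have leib := iter_leib (LinearMap.mul F R) D hD
  simp only [LinearMap.mul_apply'] at leib
  have h1 : ∀ k, ∀ p ∈ W ^ k, ∀ j < k, (D ^ j) p ∈ I := by
    intro k
    induction k with
    | zero => intro p _ j hj; omega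
    | succ k ih =>
      intro p hp j hj
      have : W ^ (k + 1) ≤ I.comap (D ^ j) := by
        rw [pow_succ', Submodule.mul_le]
        intro w hw q hq
        rw [Submodule.mem_comap, leib]
        refine Submodule.sum_mem _ fun ij hij => ?_
        rw [Finset.HasAntidiagonal.mem_antidiagonal] at hij
        refine Submodule.smul_of_tower_mem _ _ ?_
        by_cases hi : ij.1 = 0
        · rw [hi]
          exact mIr (hWI (by simpa using hw)) (hDn _ _ (hWkU k hq))
        · exact mIl (hDn _ _ (hWU hw)) (ih _ hq _ (by omega))
      exact this hp
  have h2 : ∀ k, (W ⊔ W.map D) ^ k ≤ I ⊔ (W ^ k).map (D ^ k) := by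
    intro k
    induction k with
    | zero =>
      have : (1 : Module.End F R) = LinearMap.id := rfl
      simp [this]
    | succ k ih =>
      rw [pow_succ', Submodule.mul_le]
      intro x hx y hy
      obtain ⟨w, hw, _, ⟨u, hu, rfl⟩, rfl⟩ := Submodule.mem_sup.1 hx
      obtain ⟨i, hi, _, ⟨p, hp, rfl⟩, rfl⟩ := Submodule.mem_sup.1 (ih hy)
      have hpU := hDn k _ (hWkU k hp)
      have key : D u * (D ^ k) p ∈ I ⊔ (W ^ (k + 1)).map (D ^ (k + 1)) := by
        have e := leib (k + 1) u p
        have hm : (1, k) ∈ Finset.HasAntidiagonal.antidiagonal (k + 1) := by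
          rw [Finset.HasAntidiagonal.mem_antidiagonal]; dsimp only; omega
        rw [← Finset.add_sum_erase _ _ hm] at e
        have hc : ((k + 1).choose 1 : F) ≠ 0 := by
          rw [Nat.cast_ne_zero]
          exact (Nat.choose_pos (by omega)).ne'
        rw [← Submodule.smul_mem_iff _ hc, Nat.cast_smul_eq_nsmul]
        have e' := eq_sub_of_add_eq e.symm
        simp only [pow_one] at e'
        rw [e']
        refine Submodule.sub_mem _ (Submodule.mem_sup_right ⟨_, ?_, rfl⟩)
          (Submodule.mem_sup_left (Submodule.sum_mem _ fun ij hij => ?_))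
        · rw [pow_succ']; exact Submodule.mul_mem_mul hu hp
        rw [Finset.mem_erase, Finset.HasAntidiagonal.mem_antidiagonal] at hij
        refine Submodule.smul_of_tower_mem _ _ ?_
        by_cases hi : ij.1 = 0
        · rw [hi]
          exact mIr (hWI (by simpa using hu)) (hDn _ _ (hWkU k hp))
        · refine mIl (hDn _ _ (hWU hu)) (h1 k _ hp _ ?_)
          by_contra hj
          apply hij.1
          ext <;> dsimp only <;> omega
      rw [add_mul, mul_add (D u)]
      refine Submodule.add_mem _ (Submodule.mem_sup_left ?_) (Submodule.add_mem _
        (Submodule.mem_sup_left ?_) key)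
      · refine mIr (hWI hw) (add_mem ?_ hpU)
        exact (mul_le_mul' hWU le_rfl |>.trans hUU) hi
      · exact mIl (hDU _ (hWU hu)) hi
  refine ⟨m * m, ?_⟩
  have h3 : (W ⊔ W.map D) ^ m ≤ I := by simpa [hm] using h2 m
  rw [pow_mul, eq_bot_iff]
  calc ((W ⊔ W.map D) ^ m) ^ m ≤ I ^ m := pow_le_pow_left' h3 m
    _ ≤ W ^ m * U := hIk m
    _ = ⊥ := by rw [hm, Submodule.bot_mul]

/-- the commutator as a bilinear map -/
def commBil (F R : Type*) [Field F] [Ring R] [Algebra F R] : R →ₗ[F] R →ₗ[F] R :=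
  LinearMap.mul F R - (LinearMap.mul F R).flip

theorem commBil_apply {R : Type*} [Ring R] [Algebra F R] (x y : R) :
    commBil F R x y = x * y - y * x := rfl

/-- climbing one step along the chain -/
theorem climb {R : Type*} [Ring R] [Algebra F R] [FiniteDimensional F R]
    (Q : Submodule F R → Prop)
    (hQ : ∀ (x : R) (V W : Submodule F R), W ≤ V → (∀ v ∈ V, ∀ w ∈ W, v * w - w * v ∈ W) →
      (∀ v ∈ V, x * v - v * x ∈ V) → Q W → Q (W ⊔ W.map (commBil F R x)))
    (V V' W₀ : Submodule F R) (hV : ∀ v ∈ V', ∀ w ∈ V, v * w - w * v ∈ V) (hVV : V ≤ V')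
    (hW : W₀ ≤ V) (hi : ∀ v ∈ V, ∀ w ∈ W₀, v * w - w * v ∈ W₀) (hq : Q W₀) :
    ∃ W, W₀ ≤ W ∧ W ≤ V' ∧ (∀ v ∈ V', ∀ w ∈ W, v * w - w * v ∈ W) ∧ Q W := by
  obtain ⟨W, ⟨h1, h2, h3, h4⟩, hmax⟩ := WellFounded.has_min
    (wellFounded_gt (α := Submodule F R))
    {W | W₀ ≤ W ∧ W ≤ V ∧ (∀ v ∈ V, ∀ w ∈ W, v * w - w * v ∈ W) ∧ Q W}
    ⟨W₀, le_rfl, hW, hi, hq⟩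
  refine ⟨W, h1, h2.trans hVV, ?_, h4⟩
  intro x hx w hw
  by_contra hcon
  refine hmax (W ⊔ W.map (commBil F R x)) ⟨h1.trans le_sup_left, ?_, ?_,
    hQ x V W h2 h3 (hV x hx) h4⟩ ?_
  · refine sup_le h2 ?_
    rintro _ ⟨u, hu, rfl⟩
    exact hV x hx u (h2 hu)
  · intro v hv y hy
    obtain ⟨a, ha, _, ⟨u, hu, rfl⟩, rfl⟩ := Submodule.mem_sup.1 hy
    have e : v * (a + commBil F R x u) - (a + commBil F R x u) * v =
      ((v * a - a * v) - ((x * v - v * x) * u - u * (x * v - v * x))) +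
        commBil F R x (v * u - u * v) := by
      simp only [commBil_apply]; noncomm_ring
    rw [e]
    refine Submodule.add_mem_sup (sub_mem (h3 v hv a ha) (h3 _ (hV x hx v hv) u hu)) ?_
    exact ⟨_, h3 v hv u hu, rfl⟩
  · refine lt_of_le_of_ne le_sup_left fun h => hcon ?_
    rw [h]
    exact Submodule.mem_sup_right ⟨w, hw, rfl⟩

variable {A : Type*} [AddCommGroup A] [Module F A]

theorem leftMul_mul (mul : A →ₗ[F] A →ₗ[F] A)
    (hleib : ∀ x y z : A, mul x (mul y z) = mul (mul x y) z + mul y (mul x z)) (x y : A) :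
    mul (mul x y) = (mul x : Module.End F A) * mul y - (mul y : Module.End F A) * mul x := by
  ext z
  have := hleib x y z
  simp only [LinearMap.sub_apply, Module.End.mul_apply]
  rw [this]; abel

/-- climbing the whole chain -/
theorem climb_all [FiniteDimensional F A] (mul : A →ₗ[F] A →ₗ[F] A)
    (hleib : ∀ x y z : A, mul x (mul y z) = mul (mul x y) z + mul y (mul x z))
    (Q : Submodule F (Module.End F A) → Prop)
    (hQ : ∀ (x : Module.End F A) (V W : Submodule F (Module.End F A)),
      W ≤ V → (∀ v ∈ V, ∀ w ∈ W, v * w - w * v ∈ W) →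
      (∀ v ∈ V, x * v - v * x ∈ V) → Q W → Q (W ⊔ W.map (commBil F _ x)))
    (t : ℕ) (c : ℕ → Submodule F A) (hc : ∀ i < t, IsIdealIn mul (c i) (c (i + 1)))
    (T : Submodule F A) (hT : IsIdealIn mul T (c 0)) (hq : Q (T.map mul)) (i : ℕ) (hi : i ≤ t) :
    ∃ W, T.map mul ≤ W ∧ W ≤ (c i).map mul ∧
      (∀ v ∈ (c i).map mul, ∀ w ∈ W, v * w - w * v ∈ W) ∧ Q W := by
  induction i with
  | zero =>
    refine ⟨_, le_rfl, Submodule.map_mono hT.1, ?_, hq⟩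
    rintro _ ⟨x, hx, rfl⟩ _ ⟨y, hy, rfl⟩
    exact ⟨mul x y, (hT.2 x hx y hy).1, leftMul_mul mul hleib x y⟩
  | succ i ih =>
    obtain ⟨W₀, h1, h2, h3, h4⟩ := ih (by omega)
    have hci := hc i (by omega)
    obtain ⟨W, g1, g2, g3, g4⟩ := climb Q hQ ((c i).map mul) ((c (i + 1)).map mul) W₀ (by
      rintro _ ⟨x, hx, rfl⟩ _ ⟨y, hy, rfl⟩
      exact ⟨mul x y, (hci.2 x hx y hy).1, leftMul_mul mul hleib x y⟩)
      (Submodule.map_mono hci.1) h2 h3 h4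
    exact ⟨W, h1.trans g1, g2, g3, g4⟩

theorem comap_ideal (mul : A →ₗ[F] A →ₗ[F] A)
    (hleib : ∀ x y z : A, mul x (mul y z) = mul (mul x y) z + mul y (mul x z))
    (W : Submodule F (Module.End F A))
    (h : ∀ v ∈ (⊤ : Submodule F A).map mul, ∀ w ∈ W, v * w - w * v ∈ W) :
    IsIdealIn mul (W.comap mul) ⊤ := by
  refine ⟨le_top, fun x _ y hy => ?_⟩
  have := h (mul x) ⟨x, trivial, rfl⟩ (mul y) hy
  constructor
  · rw [Submodule.mem_comap, leftMul_mul mul hleib]; exact this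
  · rw [Submodule.mem_comap, leftMul_mul mul hleib, ← neg_sub]; exact neg_mem this

theorem ds_map (mul : A →ₗ[F] A →ₗ[F] A)
    (hleib : ∀ x y z : A, mul x (mul y z) = mul (mul x y) z + mul y (mul x z))
    (T : Submodule F A) (n : ℕ) :
    ds (commBil F (Module.End F A)) (T.map mul) n ≤ (ds mul T n).map mul := by
  induction n with
  | zero => exact le_rfl
  | succ n ih =>
    refine mulSub_le.2 fun x hx y hy => ?_
    obtain ⟨x, hx', rfl⟩ := ih hx
    obtain ⟨y, hy', rfl⟩ := ih hy
    exact ⟨mul x y, mem_mulSub hx' hy', leftMul_mul mul hleib x y⟩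

theorem ds_comap (mul : A →ₗ[F] A →ₗ[F] A)
    (hleib : ∀ x y z : A, mul x (mul y z) = mul (mul x y) z + mul y (mul x z))
    (W : Submodule F (Module.End F A)) (n : ℕ) :
    ds mul (W.comap mul) n ≤ (ds (commBil F (Module.End F A)) W n).comap mul := by
  induction n with
  | zero => exact le_rfl
  | succ n ih =>
    refine mulSub_le.2 fun x hx y hy => ?_
    rw [Submodule.mem_comap, leftMul_mul mul hleib]
    exact mem_mulSub (b := commBil F (Module.End F A)) (ih hx) (ih hy)

theorem solv_comap (mul : A →ₗ[F] A →ₗ[F] A)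
    (hleib : ∀ x y z : A, mul x (mul y z) = mul (mul x y) z + mul y (mul x z))
    (W : Submodule F (Module.End F A)) (h : IsSolvableSub (commBil F (Module.End F A)) W) :
    IsSolvableSub mul (W.comap mul) := by
  obtain ⟨m, hm⟩ := h
  refine ⟨m + 1, eq_bot_iff.2 (mulSub_le.2 fun x hx y hy => ?_)⟩
  have := ds_comap mul hleib W m hx
  rw [hm, Submodule.mem_comap, Submodule.mem_bot] at this
  rw [this]; simp

theorem lcs_comap (mul : A →ₗ[F] A →ₗ[F] A) (W : Submodule F (Module.End F A)) (n : ℕ) :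
    lcs mul (W.comap mul) n ≤ Submodule.span F {z | ∃ f ∈ W ^ n, ∃ a, f a = z} := by
  induction n with
  | zero => intro x _; exact Submodule.subset_span ⟨1, by rw [pow_zero]; exact Submodule.one_le.1 le_rfl, x, rfl⟩
  | succ n ih =>
    refine mulSub_le.2 fun x hx y hy => ?_
    have h : Submodule.span F {z | ∃ f ∈ W ^ n, ∃ a, f a = z} ≤
        (Submodule.span F {z | ∃ f ∈ W ^ (n + 1), ∃ a, f a = z}).comap (mul x) := by
      rw [Submodule.span_le]
      rintro _ ⟨f, hf, a, rfl⟩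
      refine Submodule.subset_span ⟨mul x * f, ?_, a, rfl⟩
      rw [pow_succ']
      exact Submodule.mul_mem_mul hx hf
    exact h (ih hy)

theorem nil_comap (mul : A →ₗ[F] A →ₗ[F] A) (W : Submodule F (Module.End F A))
    (h : ∃ m, W ^ m = ⊥) : IsNilpotentSub mul (W.comap mul) := by
  obtain ⟨m, hm⟩ := h
  refine ⟨m, eq_bot_iff.2 ((lcs_comap mul W m).trans ?_)⟩
  rw [Submodule.span_le]
  rintro _ ⟨f, hf, a, rfl⟩
  rw [hm, Submodule.mem_bot] at hf
  simp [hf]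

theorem pow_range_succ {W : Submodule F (Module.End F A)} {k : ℕ} {X Y : Submodule F A}
    (h : ∀ f ∈ W ^ k, ∀ a, f a ∈ X) (hXY : ∀ f ∈ W, ∀ x ∈ X, f x ∈ Y) :
    ∀ f ∈ W ^ (k + 1), ∀ a, f a ∈ Y := by
  intro f hf a
  rw [pow_succ'] at hf
  refine Submodule.mul_induction_on hf ?_ ?_
  · intro g hg p hp
    exact hXY g hg _ (h p hp a)
  · intro p q hp hq
    exact add_mem hp hq

theorem nil_map (mul : A →ₗ[F] A →ₗ[F] A)
    (t : ℕ) (c : ℕ → Submodule F A) (hct : c t = ⊤)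
    (hc : ∀ i < t, IsIdealIn mul (c i) (c (i + 1)))
    (T : Submodule F A) (hT : IsIdealIn mul T (c 0)) (hn : IsNilpotentSub mul T) :
    ∃ m, (T.map mul) ^ m = ⊥ := by
  have h0 : ∀ i ≤ t, T ≤ c i := by
    intro i
    induction i with
    | zero => intro _; exact hT.1
    | succ i ih => intro hi; exact (ih (by omega)).trans (hc i (by omega)).1
  have h1 : ∀ i ≤ t, ∀ f ∈ (T.map mul) ^ i, ∀ a, f a ∈ c (t - i) := by
    intro i
    induction i with
    | zero => intro _ f _ a; simp [hct]
    | succ i ih =>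
      intro hi
      refine pow_range_succ (ih (by omega)) ?_
      rintro _ ⟨y, hy, rfl⟩ x hx
      have := hc (t - (i + 1)) (by omega)
      rw [show t - (i + 1) + 1 = t - i by omega] at this
      exact (this.2 x hx y (h0 _ (by omega) hy)).2
  have h2 : ∀ k, ∀ f ∈ (T.map mul) ^ (t + 1 + k), ∀ a, f a ∈ lcs mul T k := by
    intro k
    induction k with
    | zero =>
      refine pow_range_succ (h1 t le_rfl) ?_
      rintro _ ⟨y, hy, rfl⟩ x hx
      rw [Nat.sub_self] at hx
      exact (hT.2 x hx y hy).2
    | succ k ih =>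
      refine pow_range_succ ih ?_
      rintro _ ⟨y, hy, rfl⟩ x hx
      exact mem_mulSub hy hx
  obtain ⟨m, hm⟩ := hn
  refine ⟨t + 1 + m, eq_bot_iff.2 fun f hf => ?_⟩
  rw [Submodule.mem_bot]
  ext a
  have := h2 m f hf a
  rw [hm] at this
  simpa using this

end Helpers

/-- over characteristic zero, for `B` subinvariant in `A`,
`rad(B) = B ∩ rad(A)` and `nilrad(B) = B ∩ nilrad(A)`. -/
theorem stmt_15 {F A : Type*} [Field F] [CharZero F]
    [AddCommGroup A] [Module F A] [FiniteDimensional F A]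
    (mul : A →ₗ[F] A →ₗ[F] A)
    (hleib : ∀ x y z : A, mul x (mul y z) = mul (mul x y) z + mul y (mul x z))
    (B R N RB NB : Submodule F A)
    (hB : IsSubinvariantIn mul B ⊤)
    (hR : IsRadicalIn mul ⊤ R) (hN : IsNilradicalIn mul ⊤ N)
    (hRB : IsRadicalIn mul B RB) (hNB : IsNilradicalIn mul B NB) :
    RB = B ⊓ R ∧ NB = B ⊓ N := by
  obtain ⟨t, c, rfl, hct, hsub, hc⟩ := hB
  have hinf : ∀ T, IsIdealIn mul T ⊤ → IsIdealIn mul (c 0 ⊓ T) (c 0) := by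
    intro T hT
    refine ⟨inf_le_left, fun x hx y hy => ?_⟩
    have h := hT.2 x trivial y hy.2
    exact ⟨⟨hsub 0 (by omega) x hx y hy.1, h.1⟩, ⟨hsub 0 (by omega) y hy.1 x hx, h.2⟩⟩
  have hder : ∀ x a b : Module.End F A, commBil F _ x (a * b) =
      commBil F _ x a * b + a * commBil F _ x b := by
    intro x a b
    simp only [commBil_apply]; noncomm_ring
  constructor
  · apply le_antisymm
    · refine le_inf hRB.1.1 ?_
      obtain ⟨W, h1, _, h3, h4⟩ := climb_all mul hleib
        (fun W => IsSolvableSub (commBil F (Module.End F A)) W) (by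
          intro x V W hWV hl hx hs
          refine solv_step _ _ ?_ V W hWV hl ?_ hx hs
          · intro a b
            simp only [commBil_apply]; noncomm_ring
          · intro v hv w hw
            rw [commBil_apply, ← neg_sub]
            exact neg_mem (hl v hv w hw)) t c hc RB hRB.1 (by
          obtain ⟨m, hm⟩ := hRB.2.1
          refine ⟨m, eq_bot_iff.2 ((ds_map mul hleib RB m).trans ?_)⟩
          rw [hm, Submodule.map_bot]) t le_rfl
      rw [hct] at h3
      exact (Submodule.map_le_iff_le_comap.1 h1).trans
        (hR.2.2 _ (comap_ideal mul hleib W h3) (solv_comap mul hleib W h4))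
    · refine hRB.2.2 _ (hinf R hR.1) ?_
      obtain ⟨m, hm⟩ := hR.2.1
      exact ⟨m, eq_bot_iff.2 (hm ▸ ds_mono mul inf_le_right m)⟩
  · apply le_antisymm
    · refine le_inf hNB.1.1 ?_
      obtain ⟨W, h1, _, h3, h4⟩ := climb_all mul hleib
        (fun W => ∃ m, W ^ m = ⊥) (by
          intro x V W hWV hl hx hs
          exact nil_step _ (hder x) V W hWV hl hx hs) t c hc NB hNB.1
          (nil_map mul t c hct hc NB hNB.1 hNB.2.1) t le_rfl
      rw [hct] at h3
      exact (Submodule.map_le_iff_le_comap.1 h1).trans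
        (hN.2.2 _ (comap_ideal mul hleib W h3) (nil_comap mul W h4))
    · refine hNB.2.2 _ (hinf N hN.1) ?_
      obtain ⟨m, hm⟩ := hN.2.1
      exact ⟨m, eq_bot_iff.2 (hm ▸ lcs_mono mul inf_le_right m)⟩
end
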